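/- arXiv:2601.09547 — 5 statements merged into one kernel-verified Lean document; each statement's English description precedes it below -/
import Mathlib

section
/- Fix ε > 0 and an integer k ≥ 2, and define F : [1,∞) → [1,∞) by F(x) := x·(log x)·(log log x)⋯(log^{(k−3)} x)·(log^{(k−2)} x)^{1+ε}, where log^{(m)} denotes the m-fold iterated logarithm (so for k = 2, F(x) = x^{1+ε}). Let ψ : ℕ → (0,∞) be monotone decreasing with Σ_{q≥1} ψ(q)/( F(log log q)·√(log q) ) = ∞. Then for any fixed integer y ≥ 1 and integer z, Σ_{n ≥ 1, n ≡ z (mod y)} ψ(n)/( F(log d(n))·d(n) ) = ∞, where d(n) denotes the number of positive divisors of n. -/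
/-!
The core is a lower bound for `∑ 1 / d(n)` over blocks `(N, 8N]`, with `n` coprime to `y` and
`d(n) ≤ 2 log n`: it is at least a constant times `N / √(log N)` (`block_lower`).

* Expanding the square and using `d(a) d(b) = d(ab)` for squarefree `ab`, the square of
  `∑ 1 / (m d(m))` over squarefree `m ≤ M` coprime to `y` is at least `∑ 1 / r` over the same
  range, which is `≫ log M` since every integer is a square times a squarefree number. Hence
  `∑ 1 / (m d(m)) ≫ √(log M)` (`sqrt_log_le_sum`). The `m` with `d(m) > log N` contribute `O(1)`.
* Integers `n = m p` with `m ≤ √N` and `p` prime in `(N/m, 8N/m]` are represented uniquely, have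
  `d(n) = 2 d(m)`, and by Chebyshev's estimates there are `≫ N / (m log N)` such `p` for each `m`.

No equidistribution of primes in progressions is needed to reach the residue class of `z`: each
`n` coprime to `y` has a multiple `t n ≡ z (mod y)` with `t` bounded, and this changes `d(n)` by a
bounded factor only. Including a high power of `1 + y` in `t` makes `d(t n)` large enough for `F`
to be positive and increasing at `log d(t n)` (`exists_multiplier`). Since `d(n) ≤ 2 log n` and
`F` is doubling, `F(log d(t n))` is `O(F(log log n))`.

If the sum over the residue class converged (hence absolutely), then comparing block by block over
`(8^j, 8^(j+1)]` and using that `ψ` decreases, `∑ 8^j u(8^j)` would converge, where `u` is the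
summand of the divergent series; Cauchy condensation then gives a contradiction.
-/

open Real

/-- The `m`-fold iterated natural logarithm. -/
noncomputable def iterLog : ℕ → ℝ → ℝ
  | 0, x => x
  | m + 1, x => Real.log (iterLog m x)

/-- The function F(x) = x·(log x)·(log log x)⋯(log^{(k−3)} x)·(log^{(k−2)} x)^{1+ε}
(so for k = 2, F(x) = x^{1+ε}). -/
noncomputable def Ffun (ε : ℝ) (k : ℕ) (x : ℝ) : ℝ :=
  (∏ m ∈ Finset.range (k - 2), iterLog m x) * iterLog (k - 2) x ^ ((1 : ℝ) + ε)

/-! ### Squarefree numbers and the sum of `1 / (m d(m))` -/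

theorem sum_le_sum_of_inj {ι κ : Type*} [DecidableEq κ] {s : Finset ι} {t : Finset κ}
    {f : ι → ℝ} {g : κ → ℝ} (e : ι → κ) (he : ∀ i ∈ s, e i ∈ t)
    (hinj : ∀ i ∈ s, ∀ j ∈ s, e i = e j → i = j) (hfg : ∀ i ∈ s, f i ≤ g (e i))
    (hg : ∀ k ∈ t, 0 ≤ g k) : ∑ i ∈ s, f i ≤ ∑ k ∈ t, g k := by
  calc ∑ i ∈ s, f i ≤ ∑ i ∈ s, g (e i) := Finset.sum_le_sum hfg
    _ = ∑ k ∈ s.image e, g k := (Finset.sum_image (fun i hi j hj h => hinj i hi j hj h)).symm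
    _ ≤ ∑ k ∈ t, g k := by
      apply Finset.sum_le_sum_of_subset_of_nonneg
      · intro k hk
        obtain ⟨i, hi, rfl⟩ := Finset.mem_image.1 hk
        exact he i hi
      · intro k hk _
        exact hg k hk

/-- The squarefree integers in `[1, M]` that are coprime to `y`. -/
def sqfreeCoprime (y M : ℕ) : Finset ℕ :=
  (Finset.Icc 1 M).filter (fun m => Squarefree m ∧ m.Coprime y)

theorem mem_sqfreeCoprime {y M m : ℕ} :
    m ∈ sqfreeCoprime y M ↔ (1 ≤ m ∧ m ≤ M) ∧ Squarefree m ∧ m.Coprime y := by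
  simp [sqfreeCoprime]

/-- Round `k ≤ M` down to the nearest integer congruent to `1` modulo `y` and write that integer as
`b ^ 2 * a` with `a` squarefree; then `a` is coprime to `y`. As `k` is recovered from `a`, `b` and
`(k - 1) % y`, the harmonic sum is at most `y * (∑ 1 / b ^ 2) * (∑ 1 / a)`. -/
theorem log_le_sum_sqfreeCoprime (y M : ℕ) (hy : 1 ≤ y) :
    Real.log ((M : ℝ) + 1) ≤ 2 * y * ∑ r ∈ sqfreeCoprime y M, (1 : ℝ) / r := by
  have h1 : Real.log ((M : ℝ) + 1) ≤ ∑ k ∈ Finset.Icc 1 M, (1 : ℝ) / k := by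
    have := log_add_one_le_harmonic M
    rw [harmonic_eq_sum_Icc] at this
    push_cast at this
    simpa using this
  have hex : ∀ k : ℕ, ∃ p : ℕ × ℕ, 0 < p.1 ∧ 0 < p.2 ∧ p.2 ^ 2 * p.1 = y * ((k - 1) / y) + 1 ∧
      Squarefree p.1 := by
    intro k
    obtain ⟨a, b, h⟩ := Nat.sq_mul_squarefree_of_pos (Nat.succ_pos (y * ((k - 1) / y)))
    exact ⟨(a, b), h⟩
  choose p hp1 hp2 hp3 hp4 using hex
  have hk : ∀ k, 1 ≤ k → y * ((k - 1) / y) + 1 + (k - 1) % y = k := by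
    intro k hk
    have := Nat.div_add_mod (k - 1) y
    omega
  have h2 : ∑ k ∈ Finset.Icc 1 M, (1 : ℝ) / k ≤
      ∑ x ∈ Finset.range y ×ˢ (sqfreeCoprime y M ×ˢ Finset.Ioo 0 (M + 1)),
        (1 : ℝ) * ((1 / (x.2.1 : ℝ)) * ((x.2.2 : ℝ) ^ 2)⁻¹) := by
    refine sum_le_sum_of_inj (fun k => ((k - 1) % y, p k)) ?_ ?_ ?_ ?_
    · intro k hkm
      rw [Finset.mem_Icc] at hkm
      have hkk := hk k hkm.1
      have hle : (p k).2 ^ 2 * (p k).1 ≤ M := by rw [hp3]; omega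
      have ha : (p k).1 ≤ M :=
        (Nat.le_mul_of_pos_left _ (pow_pos (hp2 k) 2)).trans hle
      have hb : (p k).2 ≤ M := by
        calc (p k).2 ≤ (p k).2 ^ 2 := Nat.le_self_pow (by norm_num) _
          _ ≤ _ := (Nat.le_mul_of_pos_right _ (hp1 k)).trans hle
      simp only [Finset.mem_product, Finset.mem_range, Finset.mem_Ioo, mem_sqfreeCoprime]
      refine ⟨Nat.mod_lt _ hy, ⟨⟨hp1 k, ha⟩, hp4 k, ?_⟩, hp2 k, by omega⟩
      have hc : Nat.Coprime ((p k).2 ^ 2 * (p k).1) y := by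
        rw [hp3]; simp
      exact Nat.Coprime.coprime_mul_left hc
    · intro i hi j hj h
      rw [Finset.mem_Icc] at hi hj
      simp only [Prod.mk.injEq] at h
      have e1 := hp3 i
      rw [h.2, hp3 j] at e1
      have := hk i hi.1
      have := hk j hj.1
      omega
    · intro k hkm
      rw [Finset.mem_Icc] at hkm
      have hkk := hk k hkm.1
      have hle : (p k).2 ^ 2 * (p k).1 ≤ k := by rw [hp3]; omega
      have ha : (0 : ℝ) < (p k).1 := by exact_mod_cast hp1 k
      have hb : (0 : ℝ) < (p k).2 := by exact_mod_cast hp2 k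
      have hle' : ((p k).2 : ℝ) ^ 2 * (p k).1 ≤ k := by exact_mod_cast hle
      calc (1 : ℝ) / k ≤ 1 / (((p k).2 : ℝ) ^ 2 * (p k).1) := by
            apply one_div_le_one_div_of_le (by positivity) hle'
        _ = _ := by field_simp
    · intro x _
      positivity
  rw [Finset.sum_product] at h2
  have h3 : ∑ x ∈ sqfreeCoprime y M ×ˢ Finset.Ioo 0 (M + 1),
      (1 : ℝ) * ((1 / (x.1 : ℝ)) * ((x.2 : ℝ) ^ 2)⁻¹) ≤
      (∑ r ∈ sqfreeCoprime y M, (1 : ℝ) / r) * 2 := by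
    simp only [one_mul]
    rw [Finset.sum_product]
    dsimp only
    rw [← Finset.sum_mul_sum]
    have := sum_Ioo_inv_sq_le (α := ℝ) 0 (M + 1)
    norm_num at this
    have h0 : 0 ≤ ∑ r ∈ sqfreeCoprime y M, (1 : ℝ) / r :=
      Finset.sum_nonneg (fun _ _ => by positivity)
    simpa using mul_le_mul_of_nonneg_left this h0
  have h4 : (∑ _i ∈ Finset.range y, ∑ x ∈ sqfreeCoprime y M ×ˢ Finset.Ioo 0 (M + 1),
      (1 : ℝ) * ((1 / (x.1 : ℝ)) * ((x.2 : ℝ) ^ 2)⁻¹)) ≤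
      ∑ _i ∈ Finset.range y, (∑ r ∈ sqfreeCoprime y M, (1 : ℝ) / r) * 2 :=
    Finset.sum_le_sum fun _ _ => h3
  rw [Finset.sum_const (s := Finset.range y) (((∑ r ∈ sqfreeCoprime y M, (1 : ℝ) / r) * 2)),
    Finset.card_range, nsmul_eq_mul] at h4
  have := h1.trans (h2.trans h4)
  linarith

/-- Expand the square and keep only pairs `(a, b)` whose product `r` is a squarefree integer up to
`M`: each such `r` arises from `d(r)` pairs, each of weight `1 / (r d(r))`. -/
theorem sum_sqfreeCoprime_le_sq (y M : ℕ) :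
    ∑ r ∈ sqfreeCoprime y M, (1 : ℝ) / r ≤
      (∑ m ∈ sqfreeCoprime y M, (1 : ℝ) / (m * m.divisors.card)) ^ 2 := by
  rw [sq, Finset.sum_mul_sum, ← Finset.sum_product']
  have h1 : ∀ r ∈ sqfreeCoprime y M, (1 : ℝ) / r =
      ∑ _x ∈ r.divisorsAntidiagonal, (1 : ℝ) / (r * r.divisors.card) := by
    intro r hr
    rw [mem_sqfreeCoprime] at hr
    have hr0 : (0 : ℝ) < r := by exact_mod_cast hr.1.1
    have hc : r.divisorsAntidiagonal.card = r.divisors.card := by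
      rw [← Nat.map_div_right_divisors]; simp
    have hd : (0 : ℝ) < r.divisors.card := by
      exact_mod_cast Finset.card_pos.2 (Nat.nonempty_divisors.2 (by omega))
    rw [Finset.sum_const, hc, nsmul_eq_mul]
    field_simp
  rw [Finset.sum_congr rfl h1, Finset.sum_sigma']
  refine sum_le_sum_of_inj (fun x => x.2) ?_ ?_ ?_ ?_
  · rintro ⟨r, a, b⟩ hx
    simp only [Finset.mem_sigma, mem_sqfreeCoprime, Nat.mem_divisorsAntidiagonal] at hx
    obtain ⟨⟨⟨hr1, hrM⟩, hsq, hco⟩, rfl, hne⟩ := hx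
    have ha : 0 < a := Nat.pos_of_ne_zero (by rintro rfl; simp at hne)
    have hb : 0 < b := Nat.pos_of_ne_zero (by rintro rfl; simp at hne)
    simp only [Finset.mem_product, mem_sqfreeCoprime]
    exact ⟨⟨⟨ha, (Nat.le_mul_of_pos_right _ hb).trans hrM⟩, hsq.of_mul_left,
      hco.coprime_mul_right⟩, ⟨hb, (Nat.le_mul_of_pos_left _ ha).trans hrM⟩, hsq.of_mul_right,
      hco.coprime_mul_left⟩
  · rintro ⟨r, a, b⟩ hx ⟨r', a', b'⟩ hx' h
    simp only [Finset.mem_sigma, Nat.mem_divisorsAntidiagonal] at hx hx'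
    simp only [Prod.mk.injEq] at h
    obtain ⟨rfl, rfl⟩ := h
    obtain ⟨_, rfl, _⟩ := hx
    obtain ⟨_, rfl, _⟩ := hx'
    rfl
  · rintro ⟨r, a, b⟩ hx
    simp only [Finset.mem_sigma, mem_sqfreeCoprime, Nat.mem_divisorsAntidiagonal] at hx
    obtain ⟨⟨⟨hr1, hrM⟩, hsq, hco⟩, rfl, hne⟩ := hx
    have hab : a.Coprime b := Nat.coprime_of_squarefree_mul hsq
    rw [hab.card_divisors_mul]
    push_cast
    apply le_of_eq
    rw [one_div_mul_one_div]
    congr 1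
    ring
  · intro x _
    positivity

theorem sqrt_log_le_sum (y M : ℕ) (hy : 1 ≤ y) :
    √(Real.log ((M : ℝ) + 1) / (2 * y)) ≤
      ∑ m ∈ sqfreeCoprime y M, (1 : ℝ) / (m * m.divisors.card) := by
  have h0 : 0 ≤ ∑ m ∈ sqfreeCoprime y M, (1 : ℝ) / (m * m.divisors.card) :=
    Finset.sum_nonneg (fun _ _ => by positivity)
  apply Real.sqrt_le_iff.2 ⟨h0, _⟩
  have hy' : (0 : ℝ) < 2 * y := by positivity
  rw [div_le_iff₀' hy']
  exact (log_le_sum_sqfreeCoprime y M hy).trans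
    (mul_le_mul_of_nonneg_left (sum_sqfreeCoprime_le_sq y M) hy'.le)

/-! ### Primes in `(x, 8x]` and the block estimate -/

/-- Chebyshev's bounds give `θ(8x) - θ(x) ≥ x` for large `x`, and each prime in `(x, 8x]`
contributes at most `2 log x` to this difference. -/
theorem eventually_card_primes :
    ∀ᶠ x : ℕ in Filter.atTop, (x : ℝ) / (2 * Real.log x) ≤
      (((Finset.Ioc x (8 * x)).filter Nat.Prime).card : ℝ) := by
  have hlo : ∀ᶠ t : ℝ in Filter.atTop,
      Real.log (t + 1) + 2 * √t * Real.log t ≤ (1 / 4) * t := by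
    have e1 : (fun t : ℝ => Real.log (t + 1)) =o[Filter.atTop] (fun t : ℝ => t) := by
      have := Real.isLittleO_log_id_atTop.comp_tendsto
        (Filter.tendsto_atTop_add_const_right Filter.atTop (1:ℝ) Filter.tendsto_id)
      refine this.trans_isBigO ?_
      refine Asymptotics.IsBigO.of_bound 2 ?_
      filter_upwards [Filter.eventually_ge_atTop 1] with t ht
      simp only [Function.comp, id, Real.norm_eq_abs]
      rw [abs_of_nonneg (by linarith), abs_of_nonneg (by linarith)]
      linarith
    have e2 : (fun t : ℝ => 2 * √t * Real.log t) =o[Filter.atTop] (fun t : ℝ => t) := by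
      have h := isLittleO_log_rpow_atTop (show (0:ℝ) < 1/2 by norm_num)
      have h2 := (Asymptotics.isBigO_refl (fun t : ℝ => √t) Filter.atTop).mul_isLittleO h
      have h3 := h2.const_mul_left 2
      refine (h3.congr' ?_ ?_)
      · filter_upwards with t; ring
      · filter_upwards [Filter.eventually_ge_atTop 0] with t ht
        rw [← Real.sqrt_eq_rpow, Real.mul_self_sqrt ht]
    have := (e1.add e2).bound (show (0:ℝ) < 1/4 by norm_num)
    filter_upwards [this, Filter.eventually_ge_atTop 0] with t ht h0
    rw [Real.norm_eq_abs, Real.norm_eq_abs, abs_of_nonneg h0] at ht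
    exact (le_abs_self _).trans ht
  have ht : Filter.Tendsto (fun x : ℕ => (8 : ℝ) * x) Filter.atTop Filter.atTop :=
    Filter.Tendsto.const_mul_atTop (by norm_num) tendsto_natCast_atTop_atTop
  filter_upwards [ht.eventually hlo, Filter.eventually_ge_atTop 8] with x hx hx8
  have hx8' : (8 : ℝ) ≤ x := by exact_mod_cast hx8
  have hge := Chebyshev.theta_ge (8 * x)
  have hle := Chebyshev.theta_le_log4_mul_x (x := (x : ℝ)) (by linarith)
  push_cast at hge
  have hl4 : Real.log 4 = 2 * Real.log 2 := by
    rw [show (4 : ℝ) = 2 ^ 2 by norm_num, Real.log_pow]; norm_num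
  have hl2 := Real.log_two_gt_d9
  have hdiff : (x : ℝ) ≤ Chebyshev.theta ((8 * x : ℕ) : ℝ) - Chebyshev.theta (x : ℝ) := by
    push_cast
    rw [hl4] at hle
    nlinarith
  have hsum : Chebyshev.theta ((8 * x : ℕ) : ℝ) - Chebyshev.theta (x : ℝ) =
      ∑ p ∈ (Finset.Ioc x (8 * x)).filter Nat.Prime, Real.log p := by
    unfold Chebyshev.theta
    rw [Nat.floor_natCast, Nat.floor_natCast, Finset.sum_filter, Finset.sum_filter,
      Finset.sum_filter, ← Finset.sum_Ioc_consecutive _ (Nat.zero_le x) (by omega : x ≤ 8 * x)]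
    ring
  have hlogx : 0 < Real.log x := Real.log_pos (by linarith)
  have hub : ∑ p ∈ (Finset.Ioc x (8 * x)).filter Nat.Prime, Real.log p ≤
      (((Finset.Ioc x (8 * x)).filter Nat.Prime).card : ℝ) * (2 * Real.log x) := by
    rw [← nsmul_eq_mul]
    apply Finset.sum_le_card_nsmul
    intro p hp
    simp only [Finset.mem_filter, Finset.mem_Ioc] at hp
    have hp0 : (0 : ℝ) < p := by exact_mod_cast hp.2.pos
    have hp8 : (p : ℝ) ≤ 8 * x := by exact_mod_cast hp.1.2
    calc Real.log p ≤ Real.log (x * x) := Real.log_le_log hp0 (by nlinarith)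
      _ = 2 * Real.log x := by rw [Real.log_mul (by linarith) (by linarith)]; ring
  rw [div_le_iff₀ (by positivity)]
  linarith

/-- The sum of `1 / d(n)` over `n ∈ (N, 8N]` coprime to `y` with `d(n) ≤ 2 log n` is
`≫ N / √(log N)`. -/
theorem block_lower (y : ℕ) (hy : 1 ≤ y) : ∃ c : ℝ, 0 < c ∧ ∀ᶠ N : ℕ in Filter.atTop,
    c * N / √(Real.log N) ≤ ∑ n ∈ (Finset.Ioc N (8 * N)).filter
      (fun n : ℕ => n.Coprime y ∧ (n.divisors.card : ℝ) ≤ 2 * Real.log n),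
        (1 : ℝ) / n.divisors.card := by
  obtain ⟨x0, hx0⟩ := Filter.eventually_atTop.1 eventually_card_primes
  have hy' : (1 : ℝ) ≤ y := by exact_mod_cast hy
  refine ⟨1 / (32 * √y), by positivity, ?_⟩
  have hlogt : Filter.Tendsto (fun N : ℕ => Real.log N) Filter.atTop Filter.atTop :=
    Real.tendsto_log_atTop.comp tendsto_natCast_atTop_atTop
  filter_upwards [hlogt.eventually_ge_atTop (64 * y),
    Filter.eventually_ge_atTop ((x0 + y + 1) * (x0 + y + 1))] with N hL hN
  set L := Real.log N with hLdef
  have hLpos : 0 < L := by linarith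
  set M := Nat.sqrt N with hM
  have hMge : x0 + y + 1 ≤ M := Nat.le_sqrt.2 hN
  have hMM : M * M ≤ N := Nat.sqrt_le N
  have hNpos : 0 < N := by nlinarith
  have hNr : (0 : ℝ) < N := by exact_mod_cast hNpos
  set S' := (sqfreeCoprime y M).filter (fun m => (m.divisors.card : ℝ) ≤ L) with hS'
  set P : ℕ → Finset ℕ := fun m => (Finset.Ioc (N / m) (8 * (N / m))).filter Nat.Prime with hP
  have hdiv : ∀ m, 1 ≤ m → m ≤ M → M ≤ N / m := by
    intro m h1 h2
    rw [Nat.le_div_iff_mul_le h1]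
    exact (Nat.mul_le_mul_left _ h2).trans hMM
  have hdpos : ∀ m, 1 ≤ m → (0 : ℝ) < m.divisors.card := by
    intro m hm
    exact_mod_cast Finset.card_pos.2 (Nat.nonempty_divisors.2 (by omega))
  -- A product `m * p` with `m ≤ M < p` determines the prime `p`, hence also `m`.
  have hinj : ∑ x ∈ S'.sigma P, (1 : ℝ) / (2 * x.1.divisors.card) ≤
      ∑ n ∈ (Finset.Ioc N (8 * N)).filter
      (fun n : ℕ => n.Coprime y ∧ (n.divisors.card : ℝ) ≤ 2 * Real.log n),
        (1 : ℝ) / n.divisors.card := by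
    have hfacts : ∀ m p, m ∈ S' → p ∈ P m → 1 ≤ m ∧ m ≤ M ∧ m.Coprime y ∧
        (m.divisors.card : ℝ) ≤ L ∧ p.Prime ∧ M < p ∧ N < m * p ∧ m * p ≤ 8 * N := by
      intro m p hm hp
      simp only [hS', hP, Finset.mem_filter, mem_sqfreeCoprime, Finset.mem_Ioc] at hm hp
      obtain ⟨⟨⟨h1, h2⟩, h3, h4⟩, h5⟩ := hm
      obtain ⟨⟨h6, h7⟩, h8⟩ := hp
      refine ⟨h1, h2, h4, h5, h8, (hdiv m h1 h2).trans_lt h6, ?_, ?_⟩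
      · rw [mul_comm]; exact (Nat.div_lt_iff_lt_mul h1).1 h6
      · calc m * p ≤ m * (8 * (N / m)) := Nat.mul_le_mul_left _ h7
          _ = 8 * (N / m * m) := by ring
          _ ≤ 8 * N := Nat.mul_le_mul_left _ (Nat.div_mul_le_self N m)
    have hcop : ∀ m p, 1 ≤ m → m ≤ M → p.Prime → M < p → m.Coprime p := by
      intro m p h1 h2 h3 h4
      exact (Nat.coprime_of_lt_prime (by omega) (by omega) h3).symm
    have hcard : ∀ m p, 1 ≤ m → m ≤ M → p.Prime → M < p →
        (((m * p).divisors.card : ℕ) : ℝ) = 2 * m.divisors.card := by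
      intro m p h1 h2 h3 h4
      rw [(hcop m p h1 h2 h3 h4).card_divisors_mul, h3.divisors,
        Finset.card_pair h3.one_lt.ne]
      push_cast; ring
    refine sum_le_sum_of_inj (fun x => x.1 * x.2) ?_ ?_ ?_ ?_
    · rintro ⟨m, p⟩ hx
      obtain ⟨hm, hp⟩ := Finset.mem_sigma.1 hx
      obtain ⟨h1, h2, h3, h4, h5, h6, h7, h8⟩ := hfacts m p hm hp
      simp only [Finset.mem_filter, Finset.mem_Ioc]
      refine ⟨⟨h7, h8⟩, Nat.Coprime.mul_left h3 ?_, ?_⟩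
      · exact (Nat.coprime_of_lt_prime (by omega) (by omega) h5)
      · rw [hcard m p h1 h2 h5 h6]
        have : L ≤ Real.log ((m * p : ℕ) : ℝ) :=
          Real.log_le_log hNr (by exact_mod_cast h7.le)
        linarith
    · rintro ⟨m, p⟩ hx ⟨m', p'⟩ hx' h
      obtain ⟨hm, hp⟩ := Finset.mem_sigma.1 hx
      obtain ⟨hm', hp'⟩ := Finset.mem_sigma.1 hx'
      obtain ⟨h1, h2, -, -, h5, h6, -, -⟩ := hfacts m p hm hp
      obtain ⟨h1', h2', -, -, h5', h6', -, -⟩ := hfacts m' p' hm' hp'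
      dsimp only at h
      have hpp : p = p' := by
        have hd : p ∣ m' * p' := ⟨m, by rw [← h]; ring⟩
        rcases h5.dvd_mul.1 hd with hd | hd
        · have := Nat.le_of_dvd (by omega) hd
          omega
        · exact (Nat.prime_dvd_prime_iff_eq h5 h5').1 hd
      subst hpp
      have := Nat.eq_of_mul_eq_mul_right h5.pos h
      subst this
      rfl
    · rintro ⟨m, p⟩ hx
      obtain ⟨hm, hp⟩ := Finset.mem_sigma.1 hx
      obtain ⟨h1, h2, -, -, h5, h6, -, -⟩ := hfacts m p hm hp
      dsimp only
      rw [hcard m p h1 h2 h5 h6]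
    · intro x _
      positivity
  refine le_trans ?_ hinj
  rw [Finset.sum_sigma]
  have hstep : ∀ m ∈ S', (N : ℝ) / (8 * L) * (1 / (m * m.divisors.card)) ≤
      ∑ _p ∈ P m, (1 : ℝ) / (2 * m.divisors.card) := by
    intro m hm
    simp only [hS', Finset.mem_filter, mem_sqfreeCoprime] at hm
    obtain ⟨⟨⟨h1, h2⟩, -, -⟩, -⟩ := hm
    have hxM := hdiv m h1 h2
    have hc := hx0 (N / m) (by omega)
    have hm0 : (0 : ℝ) < m := by exact_mod_cast h1
    have hd := hdpos m h1
    set x := N / m with hx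
    have hx2 : (2 : ℝ) ≤ x := by exact_mod_cast (by omega : 2 ≤ x)
    have hxN : (x : ℝ) ≤ N := by exact_mod_cast Nat.div_le_self N m
    have hlx : 0 < Real.log x := Real.log_pos (by linarith)
    have hlxL : Real.log x ≤ L := Real.log_le_log (by linarith) hxN
    have hNx : (N : ℝ) ≤ 2 * x * m := by
      have h := Nat.lt_mul_div_succ N h1
      have h' : (N : ℝ) < m * (x + 1) := by exact_mod_cast h
      nlinarith
    have hcard : (N : ℝ) / (4 * m * L) ≤ ((P m).card : ℝ) := by
      refine le_trans ?_ hc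
      rw [div_le_div_iff₀ (by positivity) (by positivity)]
      calc (N : ℝ) * (2 * Real.log x) ≤ (2 * x * m) * (2 * L) := by gcongr
        _ = _ := by ring
    rw [Finset.sum_const, nsmul_eq_mul]
    calc (N : ℝ) / (8 * L) * (1 / (m * m.divisors.card))
        = (N : ℝ) / (4 * m * L) * (1 / (2 * m.divisors.card)) := by field_simp; norm_num
      _ ≤ _ := by gcongr
  refine le_trans ?_ (Finset.sum_le_sum hstep)
  rw [← Finset.mul_sum]
  have hS := sqrt_log_le_sum y M hy
  have hsplit := Finset.sum_filter_add_sum_filter_not (sqfreeCoprime y M)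
    (fun m => (m.divisors.card : ℝ) ≤ L) (fun m => (1 : ℝ) / (m * m.divisors.card))
  -- The `m` with `d(m) > L` are negligible: their total is at most `(1 + log M) / L`.
  have hbad : ∑ m ∈ (sqfreeCoprime y M).filter (fun m => ¬ (m.divisors.card : ℝ) ≤ L),
      (1 : ℝ) / (m * m.divisors.card) ≤ 2 := by
    calc _ ≤ ∑ m ∈ Finset.Icc 1 M, (1 / L) * (m : ℝ)⁻¹ := by
          refine sum_le_sum_of_inj id ?_ (fun _ _ _ _ h => h) ?_ (fun _ _ => by positivity)
          · intro m hm
            simp only [Finset.mem_filter, mem_sqfreeCoprime] at hm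
            exact Finset.mem_Icc.2 hm.1.1
          · intro m hm
            simp only [Finset.mem_filter, mem_sqfreeCoprime, not_le] at hm
            have hm0 : (0 : ℝ) < m := by exact_mod_cast hm.1.1.1
            calc (1 : ℝ) / (m * m.divisors.card) ≤ 1 / (m * L) := by
                  apply one_div_le_one_div_of_le (by positivity)
                  exact mul_le_mul_of_nonneg_left hm.2.le hm0.le
              _ = _ := by simp only [id]; field_simp
      _ ≤ (1 / L) * (1 + Real.log M) := by
          rw [← Finset.mul_sum]
          have := harmonic_le_one_add_log M
          rw [harmonic_eq_sum_Icc] at this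
          push_cast at this
          gcongr
      _ ≤ 2 := by
          have : Real.log M ≤ L := Real.log_le_log (by exact_mod_cast (by omega : 0 < M))
            (by exact_mod_cast Nat.sqrt_le_self N)
          rw [one_div, inv_mul_le_iff₀ hLpos]
          linarith
  have hlogM : L / (4 * y) ≤ Real.log ((M : ℝ) + 1) / (2 * y) := by
    have h1 : (N : ℝ) ≤ ((M : ℝ) + 1) ^ 2 := by
      have := Nat.lt_succ_sqrt N
      have h2 : N ≤ (M + 1) ^ 2 := by rw [sq]; exact this.le
      exact_mod_cast h2
    have h2 : L ≤ 2 * Real.log ((M : ℝ) + 1) := by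
      have := Real.log_le_log hNr h1
      rwa [Real.log_pow] at this
    rw [div_le_div_iff₀ (by positivity) (by positivity)]
    nlinarith
  have hs1 : √(L / (4 * y)) = √L / (2 * √y) := by
    rw [Real.sqrt_div hLpos.le, Real.sqrt_mul (by norm_num), show (4 : ℝ) = 2 ^ 2 by norm_num,
      Real.sqrt_sq (by norm_num)]
  have hs2 : 4 ≤ √(L / (4 * y)) := by
    apply Real.le_sqrt_of_sq_le
    rw [le_div_iff₀ (by positivity)]
    linarith
  have hs3 := (Real.sqrt_le_sqrt hlogM).trans hS
  have hS'lo : √L / (4 * √y) ≤ ∑ m ∈ S', (1 : ℝ) / (m * m.divisors.card) := by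
    have e : √L / (4 * √y) = √(L / (4 * y)) / 2 := by rw [hs1]; field_simp; norm_num
    rw [e]
    linarith
  calc 1 / (32 * √y) * N / √L = (N : ℝ) / (8 * L) * (√L / (4 * √y)) := by
        have h0 : 0 < √L := Real.sqrt_pos.2 hLpos
        have hyy : 0 < √(y : ℝ) := Real.sqrt_pos.2 (by linarith)
        have e : L = √L * √L := (Real.mul_self_sqrt hLpos.le).symm
        have e2 : (N : ℝ) / (8 * L) = N / (8 * (√L * √L)) := by rw [← e]
        rw [e2]
        field_simp
        norm_num
    _ ≤ _ := by gcongr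

/-! ### Growth of `F` -/

theorem tendsto_iterLog (m : ℕ) : Filter.Tendsto (iterLog m) Filter.atTop Filter.atTop := by
  induction m with
  | zero => exact Filter.tendsto_id
  | succ m ih => exact Real.tendsto_log_atTop.comp ih

theorem iterLog_mono_of_pos {x x' : ℝ} (hxx : x ≤ x') :
    ∀ m, (∀ j ≤ m, 2 ≤ iterLog j x) → iterLog m x ≤ iterLog m x' := by
  intro m
  induction m with
  | zero => intro _; exact hxx
  | succ m ih =>
    intro h
    have h1 := h m (Nat.le_succ m)
    exact Real.log_le_log (by linarith) (ih fun j hj => h j (by omega))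

theorem iterLog_two_mul_le {x : ℝ} :
    ∀ m, (∀ j ≤ m, 2 ≤ iterLog j x) → iterLog m (2 * x) ≤ 2 * iterLog m x := by
  intro m
  induction m with
  | zero => intro _; exact le_rfl
  | succ m ih =>
    intro h
    have h1 := h m (Nat.le_succ m)
    have h0 := h 0 (by omega)
    have h2 := ih fun j hj => h j (by omega)
    have hx : x ≤ 2 * x := by
      change 2 ≤ x at h0
      linarith
    have h3 := iterLog_mono_of_pos hx m fun j hj => h j (by omega)
    calc Real.log (iterLog m (2 * x)) ≤ Real.log (2 * iterLog m x) :=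
          Real.log_le_log (by linarith) h2
      _ = Real.log 2 + Real.log (iterLog m x) :=
          Real.log_mul (by norm_num) (by linarith)
      _ ≤ 2 * Real.log (iterLog m x) := by
          have := Real.log_le_log (by norm_num : (0:ℝ) < 2) h1
          linarith

/-- Beyond some point `X`, `F` is positive and increasing, and `F(2x) ≤ C F(x)`. Below `X` the
iterated logarithms may be zero or negative. -/
theorem Ffun_props (ε : ℝ) (hε : 0 < ε) (k : ℕ) : ∃ X C : ℝ, 0 < X ∧ 0 < C ∧
    (∀ x, X ≤ x → 0 < Ffun ε k x) ∧
    (∀ x x', X ≤ x → x ≤ x' → Ffun ε k x ≤ Ffun ε k x') ∧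
    (∀ x, X ≤ x → Ffun ε k (2 * x) ≤ C * Ffun ε k x) := by
  have hev : ∀ᶠ x in Filter.atTop, ∀ j ∈ Finset.range (k + 1), 2 ≤ iterLog j x :=
    (Filter.eventually_all_finset _).2 fun j _ =>
      (tendsto_iterLog j).eventually_ge_atTop 2
  obtain ⟨X, hX⟩ := Filter.eventually_atTop.1 hev
  have hX' : ∀ x, max X 1 ≤ x → ∀ m ≤ k - 2, ∀ j ≤ m, 2 ≤ iterLog j x := by
    intro x hx m hm j hj
    exact hX x ((le_max_left _ _).trans hx) j (Finset.mem_range.2 (by omega))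
  refine ⟨max X 1, 2 ^ (k - 2) * 2 ^ (1 + ε), by positivity, by positivity, ?_, ?_, ?_⟩
  · intro x hx
    have h := hX' x hx
    refine mul_pos (Finset.prod_pos fun m hm => ?_) (Real.rpow_pos_of_pos ?_ _)
    · have := h m (Finset.mem_range.1 hm).le m le_rfl
      linarith
    · have := h (k - 2) le_rfl (k - 2) le_rfl
      linarith
  · intro x x' hx hxx
    have h := hX' x hx
    have h' := hX' x' (hx.trans hxx)
    refine mul_le_mul (Finset.prod_le_prod (fun m hm => ?_) (fun m hm => ?_))
      (Real.rpow_le_rpow ?_ (iterLog_mono_of_pos hxx _ (h _ le_rfl)) (by linarith))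
      (Real.rpow_nonneg ?_ _) (Finset.prod_nonneg fun m hm => ?_)
    · have := h m (Finset.mem_range.1 hm).le m le_rfl
      linarith
    · exact iterLog_mono_of_pos hxx _ (h _ (Finset.mem_range.1 hm).le)
    · have := h (k - 2) le_rfl (k - 2) le_rfl
      linarith
    · have := h (k - 2) le_rfl (k - 2) le_rfl
      linarith
    · have := h' m (Finset.mem_range.1 hm).le m le_rfl
      linarith
  · intro x hx
    have h := hX' x hx
    have hx1 : 1 ≤ x := (le_max_right _ _).trans hx
    have h' := hX' (2 * x) (hx.trans (by linarith))
    have e : 2 ^ (k - 2) * 2 ^ (1 + ε) * Ffun ε k x =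
        (∏ m ∈ Finset.range (k - 2), 2 * iterLog m x) *
          (2 * iterLog (k - 2) x) ^ ((1 : ℝ) + ε) := by
      have := h (k - 2) le_rfl (k - 2) le_rfl
      rw [Finset.prod_mul_distrib, Finset.prod_const, Finset.card_range,
        Real.mul_rpow (by norm_num) (by linarith), Ffun]
      ring
    rw [e]
    refine mul_le_mul (Finset.prod_le_prod (fun m hm => ?_) (fun m hm => ?_))
      (Real.rpow_le_rpow ?_ (iterLog_two_mul_le _ (h _ le_rfl)) (by linarith))
      (Real.rpow_nonneg ?_ _) (Finset.prod_nonneg fun m hm => ?_)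
    · have := h' m (Finset.mem_range.1 hm).le m le_rfl
      linarith
    · exact iterLog_two_mul_le _ (h _ (Finset.mem_range.1 hm).le)
    · have := h' (k - 2) le_rfl (k - 2) le_rfl
      linarith
    · have := h' (k - 2) le_rfl (k - 2) le_rfl
      linarith
    · have := h m (Finset.mem_range.1 hm).le m le_rfl
      linarith

/-! ### Moving to the residue class, and condensation -/

theorem card_divisors_mul_le (t n : ℕ) :
    (t * n).divisors.card ≤ t * n.divisors.card := by
  rw [Nat.divisors_mul]
  exact Finset.card_mul_le.trans (Nat.mul_le_mul_right _ (Nat.card_divisors_le_self t))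

/-- Every `n` coprime to `y` has a multiple `t * n ≡ z (mod y)` with `t` bounded in terms of `y`
and `D` only, and with at least `D` divisors. The witness is `t = t₀ (1 + y) ^ D` with
`t₀ ≡ z n⁻¹ (mod y)`: the power of `1 + y ≡ 1` supplies the divisors. -/
theorem exists_multiplier (y : ℕ) (hy : 1 ≤ y) (z : ℤ) (D n : ℕ) (hn : 0 < n)
    (hny : n.Coprime y) : ∃ t ∈ Finset.Icc 1 (2 * y * (1 + y) ^ D),
      ((t * n : ℕ) : ℤ) % y = z % y ∧ D ≤ (t * n).divisors.card := by
  have hy0 : (0 : ℤ) < y := by exact_mod_cast hy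
  have hbez := Nat.gcd_eq_gcd_ab n y
  rw [hny.gcd_eq_one] at hbez
  set a := Nat.gcdA n y
  have hr0 := Int.emod_nonneg (a * z) hy0.ne'
  have hr1 := Int.emod_lt_of_pos (a * z) hy0
  obtain ⟨r, hr⟩ := Int.eq_ofNat_of_zero_le hr0
  have hrlt : r < y := by rw [hr] at hr1; exact_mod_cast hr1
  have h1 : (1 + y) ^ D ≥ 1 := Nat.one_le_pow _ _ (by omega)
  -- `r + y` rather than `r`, so that the multiplier is positive.
  refine ⟨(r + y) * (1 + y) ^ D, Finset.mem_Icc.2 ⟨Nat.mul_pos (by omega) h1,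
    Nat.mul_le_mul_right _ (by omega)⟩, ?_, ?_⟩
  · change _ ≡ z [ZMOD y]
    push_cast
    have e1 : ((r : ℤ) + y) ≡ a * z [ZMOD y] := by
      have : (r : ℤ) ≡ a * z [ZMOD y] := by
        have h : (r : ℤ) = (a * z) % y := hr.symm
        rw [h]; exact Int.mod_modEq _ _
      simpa using this.add (show (y : ℤ) ≡ 0 [ZMOD y] by simp [Int.ModEq])
    have e2 : ((1 : ℤ) + y) ^ D ≡ 1 [ZMOD y] := by
      have : (1 : ℤ) + y ≡ 1 [ZMOD y] := by simp [Int.ModEq]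
      simpa using this.pow D
    have e3 : (n : ℤ) * a ≡ 1 [ZMOD y] := by
      have : (n : ℤ) * a = 1 + y * (-Nat.gcdB n y) := by push_cast at hbez; linarith
      rw [this]
      simp [Int.ModEq]
    calc ((r : ℤ) + y) * (1 + y) ^ D * n ≡ a * z * 1 * n [ZMOD y] := (e1.mul e2).mul_right _
      _ = (n * a) * z := by ring
      _ ≡ 1 * z [ZMOD y] := e3.mul_right _
      _ = z := one_mul z
  · have hdvd : (1 + y) ^ D ∣ (r + y) * (1 + y) ^ D * n :=
      Dvd.intro_left (r + y) rfl |>.mul_right n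
    have hne : (r + y) * (1 + y) ^ D * n ≠ 0 := by positivity
    calc D ≤ (Finset.range (D + 1)).card := by simp
      _ ≤ ((1 + y) ^ D).divisors.card := by
        refine Finset.card_le_card_of_injOn (fun i => (1 + y) ^ i) ?_ ?_
        · intro i hi
          have : i < D + 1 := by simpa using hi
          exact Nat.mem_divisors.2 ⟨pow_dvd_pow _ (by omega), by positivity⟩
        · intro i _ j _ h
          exact Nat.pow_right_injective (by omega : 2 ≤ 1 + y) h
      _ ≤ _ := Finset.card_le_card (Nat.divisors_subset_of_dvd hne hdvd)

/-- Cauchy condensation in base `8` for an eventually nonnegative and decreasing sequence. -/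
theorem summable_of_condensed {f : ℕ → ℝ} (q0 : ℕ) (h0 : ∀ q, q0 ≤ q → 0 ≤ f q)
    (hanti : ∀ q r, q0 ≤ q → q ≤ r → f r ≤ f q)
    (hs : Summable fun j : ℕ => (8 : ℝ) ^ j * f (8 ^ j)) : Summable f := by
  have hpow : Filter.Tendsto (fun j : ℕ => 8 ^ j) Filter.atTop Filter.atTop :=
    tendsto_pow_atTop_atTop_of_one_lt (r := (8 : ℕ)) (by norm_num)
  have key := summable_schlomilch_iff_of_nonneg (C := 8) (u := fun j => 8 ^ j)
    (f := fun q => f (max q q0)) (fun q => h0 _ (le_max_right _ _))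
    (fun m n _ hmn => hanti _ _ (le_max_right _ _) (max_le_max_right _ hmn))
    (fun n => by positivity) (pow_right_strictMono₀ (by norm_num)) (by norm_num)
    (by
      intro n
      simp only [pow_succ]
      have := Nat.one_le_pow n 8 (by norm_num)
      simp only [smul_eq_mul]
      omega)
  have h1 : Summable fun q => f (max q q0) := by
    apply key.1
    refine (summable_congr_atTop ?_).1 (hs.mul_left 7)
    filter_upwards [hpow.eventually_ge_atTop q0] with j hj
    rw [max_eq_left hj]
    push_cast
    ring
  refine (summable_congr_atTop ?_).1 h1
  filter_upwards [Filter.eventually_ge_atTop q0] with q hq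
  rw [max_eq_left hq]

theorem summable_blocks {G : ℕ → ℝ} (h0 : ∀ n, 0 ≤ G n) (hs : Summable G) :
    Summable fun j : ℕ => ∑ n ∈ Finset.Ioc (8 ^ j) (8 * 8 ^ j), G n := by
  refine summable_of_sum_range_le (c := ∑' n, G n) (fun j => Finset.sum_nonneg fun n _ => h0 n) ?_
  intro J
  have : ∑ j ∈ Finset.range J, ∑ n ∈ Finset.Ioc (8 ^ j) (8 * 8 ^ j), G n =
      ∑ n ∈ Finset.Ioc 1 (8 ^ J), G n := by
    induction J with
    | zero => simp
    | succ J ih =>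
      rw [Finset.sum_range_succ, ih, pow_succ, mul_comm (8 ^ J) 8]
      exact Finset.sum_Ioc_consecutive _ (Nat.one_le_pow _ _ (by norm_num)) (by omega)
  rw [this]
  exact hs.sum_le_tsum _ (fun n _ => h0 n)

/-- Fix ε > 0, an integer k ≥ 2, and F as above. If ψ is monotone decreasing
with Σ ψ(q)/( F(log log q)·√(log q) ) = ∞, then for any fixed y ≥ 1 and z ∈ ℤ,
Σ_{n ≥ 1, n ≡ z (mod y)} ψ(n)/( F(log d(n))·d(n) ) = ∞, where d(n) is the number of positive
divisors of n. -/
theorem stmt9 (ε : ℝ) (hε : 0 < ε) (k : ℕ) (hk : 2 ≤ k)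
    (ψ : ℕ → ℝ) (hψpos : ∀ q, 0 < ψ q) (hψanti : Antitone ψ)
    (hdiv : ¬ Summable (fun q : ℕ =>
      ψ q / (Ffun ε k (Real.log (Real.log (q : ℝ))) * Real.sqrt (Real.log (q : ℝ)))))
    (y : ℕ) (hy : 1 ≤ y) (z : ℤ) :
    ¬ Summable (fun n : ℕ =>
      if (n : ℤ) % (y : ℤ) = z % (y : ℤ) then
        ψ n / (Ffun ε k (Real.log (n.divisors.card : ℝ)) * (n.divisors.card : ℝ))
      else 0) := by
  intro hsum
  apply hdiv
  obtain ⟨X, C, hX, hC, hFpos, hFmono, hFdbl⟩ := Ffun_props ε hε k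
  obtain ⟨c, hc, hblock⟩ := block_lower y hy
  obtain ⟨D, hD⟩ := exists_nat_ge (Real.exp X)
  set B := 2 * y * (1 + y) ^ D with hB
  have hBpos : 0 < B := by positivity
  have hBr : (1 : ℝ) ≤ B := by exact_mod_cast hBpos
  set g : ℕ → ℝ := fun n : ℕ =>
      if (n : ℤ) % (y : ℤ) = z % (y : ℤ) then
        ψ n / (Ffun ε k (Real.log (n.divisors.card : ℝ)) * (n.divisors.card : ℝ))
      else 0 with hg
  -- `G` dominates `|g (t * n)|` for every admissible multiplier `t`; absolute values are needed
  -- because `g` may be negative where `d(n)` is small.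
  set G : ℕ → ℝ := fun n => ∑ t ∈ Finset.Icc 1 B, |g (t * n)| with hGdef
  have hG0 : ∀ n, 0 ≤ G n := fun n => Finset.sum_nonneg fun t _ => abs_nonneg _
  have hGs : Summable G := by
    refine summable_sum fun t ht => ?_
    have ht1 := (Finset.mem_Icc.1 ht).1
    exact hsum.abs.comp_injective (i := fun n => t * n)
      (fun a b h => Nat.eq_of_mul_eq_mul_left ht1 h)
  have hlogt : Filter.Tendsto (fun q : ℕ => Real.log q) Filter.atTop Filter.atTop :=
    Real.tendsto_log_atTop.comp tendsto_natCast_atTop_atTop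
  have hev : ∀ᶠ q : ℕ in Filter.atTop, 2 * B ≤ Real.log q ∧ X ≤ Real.log (Real.log q) :=
    (hlogt.eventually_ge_atTop _).and
      ((Real.tendsto_log_atTop.comp hlogt).eventually_ge_atTop X)
  obtain ⟨q0, hq0⟩ := Filter.eventually_atTop.1 hev
  have hq0' : ∀ q, q0 ≤ q → 0 < q := by
    intro q hq
    rcases Nat.eq_zero_or_pos q with rfl | h
    · have := (hq0 0 hq).1
      simp at this
      linarith
    · exact h
  set u : ℕ → ℝ := fun q =>
    ψ q / (Ffun ε k (Real.log (Real.log (q : ℝ))) * Real.sqrt (Real.log (q : ℝ))) with hu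
  have hloglog : ∀ q r : ℕ, q0 ≤ q → q ≤ r →
      Real.log q ≤ Real.log r ∧ Real.log (Real.log q) ≤ Real.log (Real.log r) := by
    intro q r hq hqr
    have h1 : Real.log q ≤ Real.log r :=
      Real.log_le_log (by exact_mod_cast hq0' q hq) (by exact_mod_cast hqr)
    have h2 := (hq0 q hq).1
    exact ⟨h1, Real.log_le_log (by linarith) h1⟩
  have hu0 : ∀ q, q0 ≤ q → 0 ≤ u q := by
    intro q hq
    exact div_nonneg (hψpos q).le (mul_nonneg (hFpos _ (hq0 q hq).2).le (Real.sqrt_nonneg _))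
  have huanti : ∀ q r, q0 ≤ q → q ≤ r → u r ≤ u q := by
    intro q r hq hqr
    obtain ⟨h1, h2⟩ := hloglog q r hq hqr
    have hF := hFpos _ (hq0 q hq).2
    have hl : 0 < Real.log q := by linarith [(hq0 q hq).1]
    have hF2 := hFmono _ _ (hq0 q hq).2 h2
    have hs : 0 < √(Real.log q) := Real.sqrt_pos.2 hl
    exact div_le_div₀ (hψpos q).le (hψanti hqr) (by positivity)
      (mul_le_mul hF2 (Real.sqrt_le_sqrt h1) hs.le (hF.le.trans hF2))
  have hGlow : ∀ n, q0 ≤ n → n.Coprime y → (n.divisors.card : ℝ) ≤ 2 * Real.log n →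
      ψ (B * n) / (C * B * Ffun ε k (Real.log (Real.log n))) * (1 / n.divisors.card) ≤ G n := by
    intro n hn hny hdn
    have hnpos := hq0' n hn
    obtain ⟨hl1, hl2⟩ := hq0 n hn
    obtain ⟨t, ht, hmod, hDt⟩ := exists_multiplier y hy z D n hnpos hny
    have htB : t ≤ B := (Finset.mem_Icc.1 ht).2
    have htB' : (t : ℝ) ≤ B := by exact_mod_cast htB
    set d := (t * n).divisors.card with hd
    have hd1 : (n.divisors.card : ℝ) > 0 := by
      exact_mod_cast Finset.card_pos.2 (Nat.nonempty_divisors.2 (by omega))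
    have hdle : (d : ℝ) ≤ B * n.divisors.card := by
      calc (d : ℝ) ≤ t * n.divisors.card := by exact_mod_cast card_divisors_mul_le t n
        _ ≤ _ := by gcongr
    have hexp : Real.exp X ≤ d := hD.trans (by exact_mod_cast hDt)
    have hdpos : (0 : ℝ) < d := (Real.exp_pos X).trans_le hexp
    have hXd : X ≤ Real.log d := (Real.le_log_iff_exp_le hdpos).2 hexp
    have hlpos : 0 < Real.log n := by linarith
    have hlogd : Real.log d ≤ 2 * Real.log (Real.log n) := by
      calc Real.log d ≤ Real.log (Real.log n * Real.log n) := by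
            apply Real.log_le_log hdpos
            nlinarith
        _ = _ := by rw [Real.log_mul hlpos.ne' hlpos.ne']; ring
    have hFd := (hFmono _ _ hXd hlogd).trans (hFdbl _ hl2)
    have hFd0 := hFpos _ hXd
    have hFn := hFpos _ hl2
    calc ψ (B * n) / (C * B * Ffun ε k (Real.log (Real.log n))) * (1 / n.divisors.card)
        = ψ (B * n) / ((C * Ffun ε k (Real.log (Real.log n))) * (B * n.divisors.card)) := by
          field_simp
      _ ≤ ψ (t * n) / (Ffun ε k (Real.log d) * d) := by
          apply div_le_div₀ (hψpos _).le (hψanti (Nat.mul_le_mul_right _ htB)) (by positivity)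
          exact mul_le_mul hFd hdle hdpos.le (by positivity)
      _ = g (t * n) := by
          simp only [hg]
          rw [if_pos hmod]
      _ ≤ |g (t * n)| := le_abs_self _
      _ ≤ G n := Finset.single_le_sum (f := fun t => |g (t * n)|) (fun t _ => abs_nonneg _) ht
  apply summable_of_condensed q0 hu0 huanti
  -- The shift by `1 + B` makes `8 ^ (j + 1 + B)` exceed `B * 8 ^ (j + 1)`, the largest multiple
  -- `t * n` arising from the `j`-th block.
  rw [← summable_nat_add_iff (1 + B)]
  have hpow : Filter.Tendsto (fun j : ℕ => 8 ^ j) Filter.atTop Filter.atTop :=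
    tendsto_pow_atTop_atTop_of_one_lt (r := (8 : ℕ)) (by norm_num)
  refine Summable.of_norm_bounded_eventually_nat
    ((summable_blocks hG0 hGs).mul_left (8 ^ (1 + B) * C * B / c)) ?_
  filter_upwards [hpow.eventually hblock, hpow.eventually_ge_atTop q0] with j hj hjq
  set N := 8 ^ j with hN
  set Q := 8 ^ (j + (1 + B)) with hQ
  have hQN : B * (8 * N) ≤ Q := by
    have : B ≤ 8 ^ B := (Nat.lt_pow_self (by norm_num)).le
    calc B * (8 * N) ≤ 8 ^ B * (8 * N) := Nat.mul_le_mul_right _ this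
      _ = Q := by rw [hQ, hN]; ring
  have h8Q : 8 * N ≤ Q := (Nat.le_mul_of_pos_left _ hBpos).trans hQN
  have hNQ : N ≤ Q := by omega
  obtain ⟨hl1, hl2⟩ := hloglog N Q hjq hNQ
  have hFQ := hFpos _ (hq0 Q (hjq.trans hNQ)).2
  have hlN : 0 < Real.log N := by linarith [(hq0 N hjq).1]
  have hsN : 0 < √(Real.log N) := Real.sqrt_pos.2 hlN
  have hsQ : √(Real.log N) ≤ √(Real.log Q) := Real.sqrt_le_sqrt hl1
  have hψQ := hψpos Q
  have hlow : ψ Q / (C * B * Ffun ε k (Real.log (Real.log Q))) * (c * N / √(Real.log N)) ≤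
      ∑ n ∈ Finset.Ioc N (8 * N), G n := by
    calc _ ≤ ψ Q / (C * B * Ffun ε k (Real.log (Real.log Q))) *
          ∑ n ∈ (Finset.Ioc N (8 * N)).filter
            (fun n : ℕ => n.Coprime y ∧ (n.divisors.card : ℝ) ≤ 2 * Real.log n),
            (1 : ℝ) / n.divisors.card := by gcongr
      _ ≤ ∑ n ∈ (Finset.Ioc N (8 * N)).filter
            (fun n : ℕ => n.Coprime y ∧ (n.divisors.card : ℝ) ≤ 2 * Real.log n), G n := by
          rw [Finset.mul_sum]
          refine Finset.sum_le_sum fun n hn => ?_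
          simp only [Finset.mem_filter, Finset.mem_Ioc] at hn
          obtain ⟨⟨hn1, hn2⟩, hn3, hn4⟩ := hn
          have hnq : q0 ≤ n := by omega
          refine le_trans ?_ (hGlow n hnq hn3 hn4)
          have hFn := hFpos _ (hq0 n hnq).2
          have hFnQ := hFmono _ _ (hq0 n hnq).2 (hloglog n Q hnq (hn2.trans h8Q)).2
          have hψ : ψ Q ≤ ψ (B * n) := hψanti ((Nat.mul_le_mul_left _ hn2).trans hQN)
          have := (hψpos (B * n)).le
          gcongr
      _ ≤ _ := Finset.sum_le_sum_of_subset_of_nonneg (Finset.filter_subset _ _)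
          (fun n _ _ => hG0 n)
  have hcast : ((Q : ℕ) : ℝ) = 8 ^ (1 + B) * N := by
    rw [hQ, hN]; push_cast; ring
  have hcast2 : ((8 : ℝ) ^ (j + (1 + B))) = 8 ^ (1 + B) * N := by
    rw [← hcast, hQ]; push_cast; rfl
  rw [Real.norm_of_nonneg (mul_nonneg (by positivity) (hu0 Q (hjq.trans hNQ)))]
  have hBp : (0 : ℝ) < B := by linarith
  calc (8 : ℝ) ^ (j + (1 + B)) * u Q
      = 8 ^ (1 + B) * N * (ψ Q / (Ffun ε k (Real.log (Real.log Q)) * √(Real.log Q))) := by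
        rw [hcast2]
    _ ≤ 8 ^ (1 + B) * N * (ψ Q / (Ffun ε k (Real.log (Real.log Q)) * √(Real.log N))) := by
        gcongr
    _ = 8 ^ (1 + B) * C * B / c *
        (ψ Q / (C * B * Ffun ε k (Real.log (Real.log Q))) * (c * N / √(Real.log N))) := by
        field_simp
    _ ≤ _ := by gcongr
end

section
/- Let (X,d) be a metric space with a finite measure μ such that every open set is μ-measurable. Let A be a Borel subset of X and let f : (0,∞) → (0,∞) be an increasing function with f(x) → 0 as x → 0. If μ(A ∩ U) ≥ f(μ(U)) for every open set U ⊆ X, then μ(A) = μ(X). -/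
/-!
Suppose `μ Aᶜ = b > 0`. A finite measure on a metric space is outer regular on Borel sets, so there
is an open `U ⊇ Aᶜ` with `μ U < b + f b`, that is `μ (A ∩ U) < f b`. As `b ≤ μ U`, monotonicity
gives `f b ≤ f (μ U) ≤ μ (A ∩ U)`, a contradiction.
-/

open MeasureTheory

/-- Outer regularity on Borel sets when the ambient σ-algebra may be larger than the Borel one;
it follows from the Borel case applied to the restriction of `μ` to the Borel σ-algebra. -/
lemma exists_isOpen_lt_add_of_borel {X : Type*} [MetricSpace X] [m : MeasurableSpace X]
    (μ : Measure X) [IsFiniteMeasure μ] (hm : borel X ≤ m)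
    (B : Set X) (hB : MeasurableSet[borel X] B) {ε : ENNReal} (hε : ε ≠ 0) :
    ∃ U, B ⊆ U ∧ IsOpen U ∧ μ U < μ B + ε := by
  have key : ∀ (m₀ : MeasurableSpace X) (_ : BorelSpace X) (ν : Measure X) (_ : IsFiniteMeasure ν),
      ∃ U, B ⊆ U ∧ IsOpen U ∧ ν U < ν B + ε := by
    intro m₀ _ ν _
    obtain ⟨U, hBU, hU, hlt⟩ := B.exists_isOpen_lt_add (measure_ne_top ν B) hε
    exact ⟨U, hBU, hU, hlt⟩
  obtain ⟨U, hBU, hU, hlt⟩ :=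
    key (borel X) (@BorelSpace.mk X _ (borel X) rfl) (μ.trim hm) (isFiniteMeasure_trim hm)
  have hUm : MeasurableSet[borel X] U := MeasurableSpace.measurableSet_generateFrom hU
  rw [trim_measurableSet_eq hm hUm, trim_measurableSet_eq hm hB] at hlt
  exact ⟨U, hBU, hU, hlt⟩

/-- Beresnevich–Dickinson–Velani, local-to-global lemma. Let (X,d) be a
metric space with a finite measure μ such that every open set is μ-measurable, let A be a
Borel subset of X, and let f : (0,∞) → (0,∞) be increasing with f(x) → 0 as x → 0⁺. If
μ(A ∩ U) ≥ f(μ(U)) for every open set U ⊆ X, then μ(A) = μ(X). -/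
theorem stmt11 {X : Type*} [MetricSpace X] [MeasurableSpace X]
    (μ : Measure X) [IsFiniteMeasure μ]
    (hopen : ∀ U : Set X, IsOpen U → MeasurableSet U)
    (A : Set X) (hA : MeasurableSet[borel X] A)
    (f : ℝ → ℝ) (hfpos : ∀ x : ℝ, 0 < x → 0 < f x)
    (hfmono : MonotoneOn f (Set.Ioi (0 : ℝ)))
    (hflim : Filter.Tendsto f (nhdsWithin 0 (Set.Ioi (0 : ℝ))) (nhds 0))
    (hAU : ∀ U : Set X, IsOpen U → f ((μ U).toReal) ≤ (μ (A ∩ U)).toReal) :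
    μ A = μ Set.univ := by
  have hm : borel X ≤ ‹MeasurableSpace X› := MeasurableSpace.generateFrom_le hopen
  have hAm : MeasurableSet A := hm _ hA
  by_contra hne
  have hb : μ Aᶜ ≠ 0 := by
    intro h0
    apply hne
    rw [← measure_add_measure_compl hAm, h0, add_zero]
  have hbpos : 0 < (μ Aᶜ).toReal := ENNReal.toReal_pos hb (measure_ne_top _ _)
  have hfb := hfpos _ hbpos
  obtain ⟨U, hBU, hU, hlt⟩ := exists_isOpen_lt_add_of_borel μ hm Aᶜ
    (@MeasurableSet.compl X A (borel X) hA) (ENNReal.ofReal_pos.2 hfb).ne'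
  have hle : (μ Aᶜ).toReal ≤ (μ U).toReal :=
    ENNReal.toReal_mono (measure_ne_top _ _) (measure_mono hBU)
  have hf : f (μ Aᶜ).toReal ≤ (μ (A ∩ U)).toReal :=
    (hfmono hbpos (hbpos.trans_le hle) hle).trans (hAU U hU)
  have hsplit : μ U = μ Aᶜ + μ (A ∩ U) := by
    rw [← measure_inter_add_sdiff U hAm, Set.sdiff_eq, Set.inter_eq_right.2 hBU, Set.inter_comm,
      add_comm]
  rw [hsplit] at hlt
  exact absurd hlt (not_lt.2 (by gcongr; exact ENNReal.ofReal_le_of_le_toReal hf))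
end

section
/- For Lebesgue-almost every β ∈ (0,1), for every c > 0, the inequality ‖qβ + 1/2‖ < c/q has infinitely many solutions q ∈ ℕ. -/
/-!
The inequality `‖qβ + 1/2‖ < c/q` says that `β` lies within `c/q²` of the set
`halfOddFractions q` of fractions `(2p+1)/(2q)`. So, for fixed `c`, the set of good `β` is the limsup
of the `c/q²`-thickenings of these sets. By Cassels' lemma (`blimsup_thickening_mul_ae_eq`, a
consequence of the Lebesgue density theorem), multiplying all radii by a constant changes such a
limsup only by a null set. Hence it is enough to treat the constant `c = 6`, for which every
irrational `β` is good.

For `c = 6`, take a reduced fraction `a/b` with `|β - a/b| < 1/b²` and `b` large. If `b` is even, then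
`a` is odd and `q = b/2` works. If `b` is odd, solve `qa ≡ (b-1)/2 (mod b)` with `b ≤ q < 2b`; then
`qa/b` is within `1/(2b)` of a half-integer and replacing `a/b` by `β` costs at most `q/b² ≤ 2/b`.
-/

open MeasureTheory Real

/-- Distance from a real number to the nearest integer. -/
noncomputable def distNearestInt (t : ℝ) : ℝ := |t - (round t : ℝ)|

open Filter Metric Topology

/-- The set of fractions `(2p+1)/(2q)` with `p` an integer, i.e. of `x` such that `q x` is half an
odd integer (for `q > 0`). -/
def halfOddFractions (q : ℕ) : Set ℝ := {x | ∃ p : ℤ, x = (2 * p + 1) / (2 * q)}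

/-- For a reduced fraction `a/b`, some multiple `q (a/b)` with `b/2 ≤ q ≤ 2b` is within `1/(2b)` of
a half-integer. -/
lemma exists_near_half (a b : ℤ) (hb : 0 < b) (hab : IsCoprime a b) :
    ∃ q p : ℤ, b ≤ 2 * q ∧ q ≤ 2 * b ∧ |2 * q * a - (2 * p + 1) * b| ≤ 1 := by
  obtain ⟨u, v, huv⟩ := hab
  rcases Int.even_or_odd' b with ⟨k, hk | hk⟩
  · rcases Int.even_or_odd' a with ⟨l, hl | hl⟩
    · exfalso
      have h2 : 2 * (u * l + v * k) = 1 := by rw [← huv, hl, hk]; ring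
      omega
    · refine ⟨k, l, by omega, by omega, ?_⟩
      have : 2 * k * a - (2 * l + 1) * b = 0 := by rw [hl, hk]; ring
      simp [this]
  · -- `k u a ≡ k (mod b)`; shift `k u` by a multiple of `b` into `[b, 2b)`.
    have h1 := Int.emod_nonneg (k * u) hb.ne'
    have h2 := Int.emod_lt_of_pos (k * u) hb
    have h3 := Int.emod_add_mul_ediv (k * u) b
    refine ⟨b + k * u % b, -(k * v) + a * (1 - k * u / b), by omega, by omega, ?_⟩
    have : 2 * (b + k * u % b) * a - (2 * (-(k * v) + a * (1 - k * u / b)) + 1) * b = -1 := by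
      have h4 : k * u % b = k * u - b * (k * u / b) := by linarith
      rw [h4]
      linear_combination 2 * k * huv - hk
    simp [this]

/-- An irrational number has approximations `|β - r| < 1 / r.den²` of arbitrarily large denominator:
only finitely many fractions near `β` have a bounded denominator. -/
lemma exists_rat_large_den {β : ℝ} (hβ : Irrational β) (N : ℕ) :
    ∃ r : ℚ, N < r.den ∧ |β - r| < 1 / (r.den : ℝ) ^ 2 := by
  by_contra! hcon
  refine Real.infinite_rat_abs_sub_lt_one_div_den_sq_of_irrational hβ ?_
  obtain ⟨K, hK⟩ := exists_nat_gt ((|β| + 1) * N)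
  refine Set.Finite.subset (((Set.finite_Icc (-(K : ℤ)) K).prod (Set.finite_Iic N)).image
    (fun z : ℤ × ℕ => (z.1 / z.2 : ℚ))) fun r hr => ?_
  have hr' : |β - r| < 1 / (r.den : ℝ) ^ 2 := hr
  have hden : r.den ≤ N := by
    by_contra! h
    exact absurd hr' (not_lt.mpr (hcon r h))
  have hpos : (1 : ℝ) ≤ r.den := by exact_mod_cast r.pos
  have hle : 1 / (r.den : ℝ) ^ 2 ≤ 1 := by
    rw [div_le_one (by positivity)]
    nlinarith
  have hrabs : |(r : ℝ)| ≤ |β| + 1 := by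
    have := abs_sub_abs_le_abs_sub (r : ℝ) β
    rw [abs_sub_comm] at this
    linarith
  have hnum : |(r.num : ℝ)| ≤ K := by
    have h1 : (r.num : ℝ) = r * r.den := by exact_mod_cast (Rat.mul_den_eq_num r).symm
    rw [h1, abs_mul, Nat.abs_cast]
    have h2 : (r.den : ℝ) ≤ N := by exact_mod_cast hden
    have : |(r : ℝ)| * r.den ≤ (|β| + 1) * N := by gcongr
    linarith
  refine ⟨(r.num, r.den), ⟨?_, hden⟩, Rat.num_div_den r⟩
  have : |r.num| ≤ (K : ℤ) := by exact_mod_cast hnum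
  exact abs_le.mp this

lemma irrational_exists_mem_thickening {β : ℝ} (hβ : Irrational β) (N : ℕ) :
    ∃ q : ℕ, N ≤ q ∧ 0 < q ∧ β ∈ thickening (6 / (q : ℝ) ^ 2) (halfOddFractions q) := by
  obtain ⟨r, hrN, hr⟩ := exists_rat_large_den hβ (2 * N)
  obtain ⟨q, p, hq1, hq2, hqp⟩ := exists_near_half r.num r.den (by exact_mod_cast r.pos)
    (Int.isCoprime_iff_gcd_eq_one.mpr r.reduced)
  lift q to ℕ using by omega
  have hq0 : 0 < q := by have := r.pos; omega
  refine ⟨q, by omega, hq0, mem_thickening_iff.mpr ⟨_, ⟨p, rfl⟩, ?_⟩⟩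
  have hb : (0 : ℝ) < r.den := by exact_mod_cast r.pos
  have hqR : (0 : ℝ) < q := by exact_mod_cast hq0
  have hq2' : (q : ℝ) ≤ 2 * r.den := by exact_mod_cast hq2
  have hqp' : |2 * (q : ℝ) * r.num - (2 * p + 1) * r.den| ≤ 1 := by exact_mod_cast hqp
  have hnum : (r.num : ℝ) = r * r.den := by exact_mod_cast (Rat.mul_den_eq_num r).symm
  have hsplit : β - (2 * p + 1) / (2 * q) = (β - r) +
      (2 * (q : ℝ) * r.num - (2 * p + 1) * r.den) / (2 * q * r.den) := by
    rw [hnum]; field_simp; ring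
  rw [Real.dist_eq, hsplit]
  have e1 : 1 / (r.den : ℝ) ^ 2 ≤ 4 / (q : ℝ) ^ 2 := by
    rw [div_le_div_iff₀ (by positivity) (by positivity)]
    nlinarith
  have e2 : |(2 * (q : ℝ) * r.num - (2 * p + 1) * r.den) / (2 * q * r.den)| ≤ 1 / (q : ℝ) ^ 2 := by
    rw [abs_div, abs_of_pos (show (0 : ℝ) < 2 * q * r.den by positivity),
      div_le_div_iff₀ (by positivity) (by positivity)]
    nlinarith [mul_le_mul_of_nonneg_right hqp' (sq_nonneg (q : ℝ))]
  calc _ ≤ _ := abs_add_le _ _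
    _ < 4 / (q : ℝ) ^ 2 + 1 / (q : ℝ) ^ 2 := by linarith
    _ = 5 / (q : ℝ) ^ 2 := by ring
    _ ≤ 6 / (q : ℝ) ^ 2 := by gcongr; norm_num

lemma distNearestInt_lt_of_mem_thickening {β c : ℝ} {q : ℕ} (hq : 0 < q)
    (h : β ∈ thickening (c / (q : ℝ) ^ 2) (halfOddFractions q)) :
    distNearestInt ((q : ℝ) * β + 1 / 2) < c / q := by
  obtain ⟨_, ⟨p, rfl⟩, hp⟩ := mem_thickening_iff.mp h
  have hqR : (0 : ℝ) < q := by exact_mod_cast hq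
  refine (round_le _ (p + 1)).trans_lt ?_
  have : (q : ℝ) * β + 1 / 2 - ((p + 1 : ℤ) : ℝ) = q * (β - (2 * p + 1) / (2 * q)) := by
    push_cast; field_simp; ring
  rw [this, abs_mul, abs_of_pos hqR]
  rw [Real.dist_eq] at hp
  calc _ < q * (c / (q : ℝ) ^ 2) := by gcongr
    _ = c / q := by field_simp

lemma mem_blimsup_atTop_iff {u : ℕ → Set ℝ} {P : ℕ → Prop} {x : ℝ} :
    x ∈ blimsup u atTop P ↔ {n | P n ∧ x ∈ u n}.Infinite := by
  rw [← Nat.cofinite_eq_atTop, cofinite.blimsup_set_eq]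
  rfl

lemma ae_infinite_of_pos {c : ℝ} (hc : 0 < c) :
    ∀ᵐ β : ℝ, {q : ℕ | 0 < q ∧ distNearestInt ((q : ℝ) * β + 1 / 2) < c / (q : ℝ)}.Infinite := by
  have hr : Tendsto (fun q : ℕ => 6 / (q : ℝ) ^ 2) atTop (𝓝 0) :=
    tendsto_const_nhds.div_atTop
      ((tendsto_pow_atTop two_ne_zero).comp tendsto_natCast_atTop_atTop)
  have key := blimsup_thickening_mul_ae_eq (volume : Measure ℝ) (fun q => 0 < q) halfOddFractions
    (M := c / 6) (by positivity) _ hr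
  have hirr : ∀ᵐ β : ℝ, Irrational β := by
    have : (Set.range ((↑) : ℚ → ℝ)).Countable := Set.countable_range _
    exact this.ae_notMem volume
  filter_upwards [key.mem_iff, hirr] with β hβ hi
  have hmem := mem_blimsup_atTop_iff.mp <| hβ.mpr <| mem_blimsup_atTop_iff.mpr <|
    Nat.frequently_atTop_iff_infinite.mp <| frequently_atTop.mpr
      (irrational_exists_mem_thickening hi)
  refine hmem.mono ?_
  rintro q ⟨hq, hqβ⟩
  refine ⟨hq, distNearestInt_lt_of_mem_thickening hq ?_⟩
  have hscale : c / 6 * (6 / (q : ℝ) ^ 2) = c / (q : ℝ) ^ 2 := by ring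
  rwa [hscale] at hqβ

/-- For Lebesgue-almost every β ∈ (0,1), for every c > 0, the inequality
‖qβ + 1/2‖ < c/q has infinitely many solutions q ∈ ℕ. -/
theorem stmt12 :
    ∀ᵐ β ∂(volume.restrict (Set.Ioo (0 : ℝ) 1)),
      ∀ c > (0 : ℝ),
        {q : ℕ | 0 < q ∧ distNearestInt ((q : ℝ) * β + 1 / 2) < c / (q : ℝ)}.Infinite := by
  refine ae_restrict_of_ae ?_
  -- The sets grow with `c`, so the countably many constants `1/(m+1)` suffice.
  have h : ∀ᵐ β : ℝ, ∀ m : ℕ, {q : ℕ | 0 < q ∧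
      distNearestInt ((q : ℝ) * β + 1 / 2) < (1 / ((m : ℝ) + 1)) / (q : ℝ)}.Infinite :=
    ae_all_iff.mpr fun m => ae_infinite_of_pos (by positivity)
  filter_upwards [h] with β hβ c hc
  obtain ⟨m, hm⟩ := exists_nat_one_div_lt hc
  refine (hβ m).mono ?_
  rintro q ⟨hq, hlt⟩
  refine ⟨hq, hlt.trans_le ?_⟩
  gcongr
end

section
/- For Lebesgue-almost every β ∈ (0,1), for every c > 0, the inequality ‖(q − 1/2)β + 1/2‖ < c/q has infinitely many solutions q ∈ ℕ. -/
open MeasureTheory Real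

/-!
Writing `n = 2 q - 1`, the inequality asks for an odd integer `m` with `|n β - m| < 2 c / q`, so the
theorem says that almost every `β` is approximated by fractions `m / n` with `m` and `n` odd, up to
an arbitrarily small multiple of `1 / n ^ 2`, for infinitely many `n`.

For a *fixed* multiple this holds for every irrational `β` (`infinite_odd_approx`). Dirichlet's
theorem gives reduced fractions `p / q` with `|q β - p| ≤ 1 / q` and `q` arbitrarily large; if `p`
and `q` are not both odd, a solution of `p n - m q = 1` with `m`, `n` odd and `0 < n ≤ 2 q` exists
(`exists_odd_odd`), and it satisfies `|n β - m| ≤ 3 / q`, hence `n |n β - m| ≤ 6`.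

The constant is then made arbitrarily small by Cassels' lemma (`blimsup_thickening_mul_ae_eq`):
rescaling all the radii in a limsup of thickenings by one positive factor changes that set by a null
set only.
-/

/-- If `p n - m q = 1`, the vectors `(p, q)` and `(m, n)` are distinct and nonzero modulo `2`, so one
of `(p, q)`, `(m, n)` and their sum has both entries odd. -/
lemma exists_odd_odd (p q : ℤ) (hq : 0 < q) (h : IsCoprime p q) :
    ∃ m n : ℤ, Odd m ∧ Odd n ∧ 0 < n ∧ n ≤ 2 * q ∧ |p * n - m * q| ≤ 1 := by
  by_cases hodd : Odd p ∧ Odd q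
  · exact ⟨p, q, hodd.1, hodd.2, hq, by omega, by simp⟩
  obtain ⟨a, b, hab⟩ := h
  have hn0 : 0 ≤ a % q := Int.emod_nonneg a hq.ne'
  have hn1 : a % q < q := Int.emod_lt_of_pos a hq
  obtain ⟨n, m, hn, hn', hdet⟩ : ∃ n m : ℤ, 0 ≤ n ∧ n < q ∧ p * n - m * q = 1 := by
    refine ⟨a % q, -b - p * (a / q), hn0, hn1, ?_⟩
    have := Int.mul_ediv_add_emod a q
    linear_combination hab + p * this
  by_cases hmn : Odd m ∧ Odd n
  · refine ⟨m, n, hmn.1, hmn.2, ?_, by omega, by rw [hdet]; simp⟩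
    rcases hn.eq_or_lt with h0 | h0
    · exact absurd hmn.2 (by rw [← h0]; decide)
    · exact h0
  · have hpar : Odd (p * n - m * q) := by rw [hdet]; exact odd_one
    have hsum : Odd (m + p) ∧ Odd (n + q) := by
      simp only [Int.odd_sub, Int.odd_add, Int.odd_mul, ← Int.not_odd_iff_even] at *
      tauto
    exact ⟨m + p, n + q, hsum.1, hsum.2, by omega, by omega,
      by rw [show p * (n + q) - (m + p) * q = 1 by linear_combination hdet]; simp⟩

lemma exists_lower_bound {β : ℝ} (hβ : Irrational β) (B : ℕ) :
    ∃ ε > 0, ∀ n : ℕ, 0 < n → n ≤ B → ∀ m : ℤ, ε ≤ |n * β - m| := by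
  induction B with
  | zero => exact ⟨1, one_pos, fun n h1 h2 => by omega⟩
  | succ B ih =>
    obtain ⟨ε, hε, h⟩ := ih
    refine ⟨min ε |(B + 1 : ℕ) * β - round ((B + 1 : ℕ) * β)|, lt_min hε ?_, ?_⟩
    · rw [abs_pos, sub_ne_zero]
      exact (hβ.natCast_mul (Nat.succ_ne_zero B)).ne_int _
    · intro n hn hnB m
      rcases Nat.lt_or_ge B n with hlt | hle
      · obtain rfl : n = B + 1 := by omega
        exact (min_le_right _ _).trans (round_le _ _)
      · exact (min_le_left _ _).trans (h n hn hle m)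

lemma exists_rat_den_gt {β : ℝ} (hβ : Irrational β) (B : ℕ) :
    ∃ r : ℚ, B < r.den ∧ |r.den * β - r.num| ≤ 1 / r.den := by
  obtain ⟨ε, hε, h⟩ := exists_lower_bound hβ B
  obtain ⟨N, hN⟩ := exists_nat_one_div_lt hε
  obtain ⟨r, hr, hden⟩ := Real.exists_rat_abs_sub_le_and_den_le β (Nat.succ_pos N)
  have hd : (0 : ℝ) < r.den := by exact_mod_cast r.pos
  have hle : |r.den * β - r.num| ≤ 1 / ((N + 1 : ℕ) + 1 : ℝ) := by
    have e : r.den * β - r.num = r.den * (β - r) := by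
      have : (r : ℝ) = r.num / r.den := Rat.cast_def r
      rw [this]; field_simp
    rw [e, abs_mul, abs_of_pos hd]
    calc (r.den : ℝ) * |β - r| ≤ r.den * (1 / (((N + 1 : ℕ) + 1 : ℝ) * r.den)) := by gcongr
      _ = _ := by field_simp
  refine ⟨r, ?_, hle.trans ?_⟩
  · by_contra hB
    have h1 := h r.den r.pos (not_lt.mp hB) r.num
    have h2 : 1 / ((N + 1 : ℕ) + 1 : ℝ) ≤ 1 / ((N : ℝ) + 1) := by
      gcongr; simp
    linarith
  · have : (r.den : ℝ) ≤ (N + 1 : ℕ) := by exact_mod_cast hden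
    gcongr
    linarith

/-- Each irrational number has infinitely many approximations `m / n` with `m`, `n` odd and error
less than `7 / n ^ 2`. -/
lemma infinite_odd_approx {β : ℝ} (hβ : Irrational β) :
    {n : ℕ | Odd n ∧ ∃ m : ℤ, Odd m ∧ |β - m / n| < 7 / (n : ℝ) ^ 2}.Infinite := by
  refine Set.infinite_of_not_bddAbove fun ⟨B, hB⟩ => ?_
  obtain ⟨ε, hε, h⟩ := exists_lower_bound hβ B
  obtain ⟨Q, hQ⟩ := exists_nat_gt (3 / ε)
  obtain ⟨r, hrQ, hr⟩ := exists_rat_den_gt hβ Q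
  have hd : (0 : ℝ) < r.den := by exact_mod_cast r.pos
  obtain ⟨m, n, hm, hn, hn0, hn2, hdet⟩ := exists_odd_odd r.num r.den (by exact_mod_cast r.pos)
    (Rat.isCoprime_num_den r)
  lift n to ℕ using hn0.le
  have hn0' : (0 : ℝ) < n := by exact_mod_cast hn0
  have hn2' : (n : ℝ) ≤ 2 * r.den := by exact_mod_cast hn2
  have hdet' : |(r.num : ℝ) * n - m * r.den| ≤ 1 := by exact_mod_cast hdet
  have hsmall : |n * β - m| ≤ 3 / r.den := by
    have e : n * β - m = n / r.den * (r.den * β - r.num) + (r.num * n - m * r.den) / r.den := by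
      field_simp; ring
    rw [e]
    refine (abs_add_le _ _).trans ?_
    rw [abs_mul, abs_of_pos (div_pos hn0' hd), abs_div, abs_of_pos hd]
    calc n / r.den * |r.den * β - r.num| + |(r.num : ℝ) * n - m * r.den| / r.den
        ≤ (2 * r.den) / r.den * (1 / r.den) + 1 / r.den := by gcongr
      _ = 3 / r.den := by field_simp; norm_num
  have hnB : n ≤ B := by
    refine hB ⟨by exact_mod_cast hn, m, hm, ?_⟩
    have e : β - m / n = (n * β - m) / n := by field_simp
    rw [e, abs_div, abs_of_pos hn0', div_lt_div_iff₀ hn0' (by positivity)]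
    have h6 : n * |n * β - m| ≤ 6 := by
      calc n * |n * β - m| ≤ (2 * r.den) * (3 / r.den) := by gcongr
        _ = 6 := by field_simp; norm_num
    nlinarith
  have hlow := h n (by exact_mod_cast hn0) hnB m
  have hlt : 3 / (r.den : ℝ) < ε := by
    have : (Q : ℝ) < r.den := by exact_mod_cast hrQ
    rw [div_lt_iff₀ hε] at hQ
    rw [div_lt_iff₀ hd]
    nlinarith
  linarith

/-- Cassels' lemma lowers the constant in `infinite_odd_approx` to any `M * 7` with `0 < M`, at the
cost of a null set. -/
lemma ae_infinite_odd_approx {M : ℝ} (hM : 0 < M) :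
    ∀ᵐ β : ℝ, {n : ℕ | Odd n ∧ ∃ m : ℤ, Odd m ∧ |β - m / n| < M * (7 / (n : ℝ) ^ 2)}.Infinite := by
  let s : ℕ → Set ℝ := fun n => {x | ∃ m : ℤ, Odd m ∧ x = m / n}
  have key := blimsup_thickening_mul_ae_eq (volume : Measure ℝ) Odd s hM
    (fun n => 7 / (n : ℝ) ^ 2)
    (tendsto_const_nhds.div_atTop
      ((Filter.tendsto_pow_atTop two_ne_zero).comp tendsto_natCast_atTop_atTop))
  rw [← Nat.cofinite_eq_atTop, Filter.cofinite.blimsup_set_eq, Filter.cofinite.blimsup_set_eq]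
    at key
  have hirr : ∀ᵐ β : ℝ, Irrational β :=
    (Set.countable_range ((↑) : ℚ → ℝ)).ae_notMem volume
  have hs (β : ℝ) (n : ℕ) (δ : ℝ) :
      β ∈ Metric.thickening δ (s n) ↔ ∃ m : ℤ, Odd m ∧ |β - m / n| < δ := by
    rw [Metric.mem_thickening_iff]
    constructor
    · rintro ⟨_, ⟨m, hm, rfl⟩, hlt⟩
      exact ⟨m, hm, hlt⟩
    · rintro ⟨m, hm, hlt⟩
      exact ⟨_, ⟨m, hm, rfl⟩, hlt⟩
  filter_upwards [hirr, key.mem_iff] with β hβ hiff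
  simp only [hs] at hiff
  exact hiff.mpr (infinite_odd_approx hβ)

/-- For Lebesgue-almost every β ∈ (0,1), for every c > 0, the inequality
‖(q − 1/2)β + 1/2‖ < c/q has infinitely many solutions q ∈ ℕ. -/
theorem stmt14 :
    ∀ᵐ β ∂(volume.restrict (Set.Ioo (0 : ℝ) 1)),
      ∀ c > (0 : ℝ),
        {q : ℕ | 0 < q ∧
          distNearestInt (((q : ℝ) - 1 / 2) * β + 1 / 2) < c / (q : ℝ)}.Infinite := by
  refine ae_restrict_of_ae ?_
  have hall : ∀ᵐ β : ℝ, ∀ k : ℕ, {n : ℕ | Odd n ∧ ∃ m : ℤ, Odd m ∧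
      |β - m / n| < 1 / ((k : ℝ) + 1) * (7 / (n : ℝ) ^ 2)}.Infinite :=
    ae_all_iff.mpr fun k => ae_infinite_odd_approx (by positivity)
  filter_upwards [hall] with β hβ c hc
  obtain ⟨k, hk⟩ := exists_nat_one_div_lt (show 0 < c / 7 by positivity)
  -- The odd `n` correspond to `q = (n + 1) / 2`, and this correspondence is injective.
  refine Set.infinite_of_injOn_mapsTo (f := fun n => (n + 1) / 2) ?_ ?_ (hβ k)
  · rintro _ ⟨⟨a, rfl⟩, -⟩ _ ⟨⟨b, rfl⟩, -⟩ hab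
    simp only at hab
    omega
  · rintro _ ⟨⟨a, rfl⟩, m, ⟨b, rfl⟩, hlt⟩
    have hq : (2 * a + 1 + 1) / 2 = a + 1 := by omega
    simp only [Set.mem_ofPred_eq, hq]
    refine ⟨Nat.succ_pos a, (round_le _ (b + 1)).trans_lt ?_⟩
    push_cast at hlt ⊢
    have ha : (0 : ℝ) ≤ a := a.cast_nonneg
    have hn : (0 : ℝ) < 2 * a + 1 := by positivity
    have e : ((a : ℝ) + 1 - 1 / 2) * β + 1 / 2 - (b + 1)
        = (2 * a + 1) / 2 * (β - (2 * b + 1) / (2 * a + 1)) := by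
      field_simp; ring
    rw [e, abs_mul, abs_of_pos (by positivity : (0 : ℝ) < (2 * a + 1) / 2)]
    calc (2 * (a : ℝ) + 1) / 2 * |β - (2 * b + 1) / (2 * a + 1)|
        < (2 * a + 1) / 2 * (c / 7 * (7 / (2 * a + 1) ^ 2)) := by
          refine mul_lt_mul_of_pos_left (hlt.trans ?_) (by positivity)
          gcongr
      _ = c / (2 * (2 * a + 1)) := by field_simp
      _ ≤ c / (a + 1) := by gcongr; linarith
end

section
/- Let γ ∈ ℝ and let ψ : ℕ → (0,∞) be non-increasing with Σ_{q≥1} ψ(q) = ∞. Then for Lebesgue-almost every β ∈ ℝ, the inequality ‖qβ − γ‖ < ψ(q) has infinitely many solutions q ∈ ℕ. -/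
/-!
The proof has three ingredients.

*Many well-spaced shifted fractions* (`exists_points`). By Dirichlet's theorem every `β` has an
approximation `p / q` with `q ≤ N` and `|β - p / q| ≤ 1 / ((N + 1) q)`. Unless `q ≤ N / 16`, which
happens on a subset of `[0, 1]` of measure at most `1 / 4`, the multiples `j β` with `N ≤ j < 2 N`
come within `17 / N` of `γ` modulo `1`, so `β` lies within `17 / N ^ 2` of a point `(γ + a) / j`.
Hence a maximal `N ^ (-2)`-separated set of such points has at least `N ^ 2 / 48` elements.

*A uniform bound* (`volume_approxSet_ge`). Around these points, at the scales `N = 200 ^ n`, take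
intervals of length `a n / N ^ 2`, with `a n` a capped version of `N ψ (2 N) / 2`; by condensation
`∑ a n` diverges. Because the points are separated, the unions `E n` of these intervals are
quasi-independent, and Bonferroni's inequality over a block with `∑ a n` of a suitable small size
bounds the measure of every tail union of the `E n` below by an absolute constant. The limsup of the
`E n` consists of solutions `β`, so the solution set has measure at least an absolute constant in
`[-20, 21]`, for all `γ` and all admissible `ψ`.

*Full measure* (`volume_approxSet_inter_closedBall_ge`). If `k β - j` is a solution for the function
`q ↦ ψ (k q)`, whose sum also diverges, then `β` is a solution for `ψ`. The uniform bound thus holds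
at every scale `1 / k` around every point, and Lebesgue's density theorem concludes.
-/

open MeasureTheory Real

open Set Filter Topology
open scoped ENNReal

/-! ### Separated finite sets of reals -/

/-- Distinct points of `P` are at distance at least `s`. -/
def Separated (s : ℝ) (P : Finset ℝ) : Prop :=
  ∀ x ∈ P, ∀ y ∈ P, x ≠ y → s ≤ |x - y|

lemma Separated.mono {s : ℝ} {P Q : Finset ℝ} (h : Separated s P) (hQ : Q ⊆ P) :
    Separated s Q := fun x hx y hy => h x (hQ hx) y (hQ hy)

lemma Separated.card_le {s : ℝ} (hs : 0 < s) {P : Finset ℝ} (h : Separated s P) {u v : ℝ}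
    (huv : u ≤ v) (hP : ∀ x ∈ P, u ≤ x ∧ x ≤ v) : (P.card : ℝ) ≤ (v - u) / s + 1 := by
  have h1 : P.card ≤ (Finset.range (⌊(v - u) / s⌋₊ + 1)).card := by
    refine Finset.card_le_card_of_injOn (fun x => ⌊(x - u) / s⌋₊) ?_ ?_
    · intro x hx
      have := hP x hx
      simp only [Finset.coe_range, Set.mem_Iio, Nat.lt_succ_iff]
      gcongr
      exact this.2
    · intro x hx y hy hxy
      by_contra hne
      have h2 := h x hx y hy hne
      have hx0 : 0 ≤ (x - u) / s := div_nonneg (by linarith [hP x hx]) hs.le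
      have hy0 : 0 ≤ (y - u) / s := div_nonneg (by linarith [hP y hy]) hs.le
      have hx1 := Nat.floor_le hx0
      have hy1 := Nat.floor_le hy0
      have hx2 := Nat.lt_floor_add_one ((x - u) / s)
      have hy2 := Nat.lt_floor_add_one ((y - u) / s)
      simp only at hxy
      rw [hxy] at hx1 hx2
      have h3 : |(x - u) / s - (y - u) / s| < 1 := by rw [abs_lt]; constructor <;> linarith
      rw [← sub_div, abs_div, abs_of_pos hs, div_lt_one hs] at h3
      rw [show x - u - (y - u) = x - y by ring] at h3
      linarith
  rw [Finset.card_range] at h1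
  have h2 : 0 ≤ (v - u) / s := div_nonneg (by linarith) hs.le
  calc (P.card : ℝ) ≤ ((⌊(v - u) / s⌋₊ + 1 : ℕ) : ℝ) := by exact_mod_cast h1
    _ ≤ _ := by push_cast; linarith [Nat.floor_le h2]

/-- A bounded set contains a maximal `s`-separated subset, which is then an `s`-net. -/
lemma exists_net {s : ℝ} (hs : 0 < s) {u v : ℝ} (huv : u ≤ v) (S : Set ℝ)
    (hS : ∀ x ∈ S, u ≤ x ∧ x ≤ v) :
    ∃ P : Finset ℝ, (∀ x ∈ P, x ∈ S) ∧ Separated s P ∧ ∀ x ∈ S, ∃ p ∈ P, |x - p| < s := by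
  by_contra hcon
  push Not at hcon
  have key : ∀ n : ℕ, ∃ P : Finset ℝ, (∀ x ∈ P, x ∈ S) ∧ Separated s P ∧ P.card = n := by
    intro n
    induction n with
    | zero => exact ⟨∅, by simp, by simp [Separated], rfl⟩
    | succ n ih =>
      obtain ⟨P, hPS, hsep, hc⟩ := ih
      obtain ⟨x, hxS, hx⟩ := hcon P hPS hsep
      have hxP : x ∉ P := fun h => by
        have := hx x h
        simp at this
        linarith
      refine ⟨insert x P, ?_, ?_, by rw [Finset.card_insert_of_notMem hxP, hc]⟩
      · intro y hy
        rcases Finset.mem_insert.1 hy with rfl | hy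
        · exact hxS
        · exact hPS y hy
      · intro y hy z hz hyz
        rcases Finset.mem_insert.1 hy with hy1 | hy1 <;>
          rcases Finset.mem_insert.1 hz with hz1 | hz1
        · exact absurd (hy1.trans hz1.symm) hyz
        · rw [hy1]; exact hx z hz1
        · rw [hz1, abs_sub_comm]; exact hx y hy1
        · exact hsep y hy1 z hz1 hyz
  obtain ⟨P, hPS, hsep, hc⟩ := key (⌊(v - u) / s⌋₊ + 2)
  have h1 := hsep.card_le hs huv (fun x hx => hS x (hPS x hx))
  rw [hc] at h1
  push_cast at h1
  linarith [Nat.lt_floor_add_one ((v - u) / s)]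

/-! ### Shifted fractions at scale `N` -/

/-- Dirichlet's theorem gives `r = p / q` with `q ≤ N` close to `β`. If `q` is not small, the
multiples `j * p / q` with `N ≤ j < N + q` exhaust all residues modulo `1` in `(1/q)ℤ`, so some
`j * β` comes within `O(1/N)` of `γ` modulo `1`. -/
lemma small_den_or_approx (β γ : ℝ) {N : ℕ} (hN : 0 < N) :
    (∃ q : ℕ, 0 < q ∧ 16 * q ≤ N ∧ ∃ p : ℤ, |β - p / q| ≤ 1 / ((N + 1) * q)) ∨
    (∃ j : ℕ, N ≤ j ∧ j < 2 * N ∧ ∃ a : ℤ, |j * β - γ - a| ≤ 17 / N) := by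
  obtain ⟨r, hr, hden⟩ := Real.exists_rat_abs_sub_le_and_den_le β hN
  have hr' : (r : ℝ) = (r.num : ℝ) / (r.den : ℝ) := by exact_mod_cast (Rat.num_div_den r).symm
  have hq0 : 0 < r.den := r.pos
  have hcop : IsCoprime r.num (r.den : ℤ) := by
    rw [Int.isCoprime_iff_gcd_eq_one, Int.gcd_eq_natAbs, Int.natAbs_natCast]
    exact r.reduced
  generalize hpn : r.num = p at *
  generalize hqn : r.den = q at *
  by_cases h16 : 16 * q ≤ N
  · left
    refine ⟨q, hq0, h16, p, ?_⟩
    rw [← hr']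
    exact hr
  · right
    push Not at h16
    have hqR : (0 : ℝ) < q := by exact_mod_cast hq0
    have hNR : (0 : ℝ) < N := by exact_mod_cast hN
    have h16R : (N : ℝ) < 16 * q := by exact_mod_cast h16
    set ε := β - r with hε
    set t : ℤ := ⌊q * (γ - N * ε)⌋ with ht
    obtain ⟨c, d, hcd⟩ := hcop
    have hqZ : (0 : ℤ) < q := by exact_mod_cast hq0
    set m : ℤ := (c * t - N) % q with hm
    have hm0 : 0 ≤ m := Int.emod_nonneg _ hqZ.ne'
    have hmq : m < q := Int.emod_lt_of_pos _ hqZ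
    have hmdiv : m = (c * t - N) - q * ((c * t - N) / q) := by
      rw [hm, Int.emod_def]
    set w := (c * t - N) / q with hw
    obtain ⟨m', hm'⟩ := Int.eq_ofNat_of_zero_le hm0
    refine ⟨N + m', by omega, by omega, -d * t - w * p, ?_⟩
    have hmR : (m' : ℝ) = c * t - N - q * w := by
      have : (m' : ℤ) = c * t - N - q * w := by rw [← hm', hmdiv]
      exact_mod_cast this
    have hmqR : (m' : ℝ) ≤ q := by
      have : m' ≤ q := by omega
      exact_mod_cast this
    have hcdR : (c : ℝ) * p + d * q = 1 := by exact_mod_cast hcd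
    have hβ : β = p / q + ε := by rw [hε, hr']; ring
    have hid : ((N + m' : ℕ) : ℝ) * β - γ - ((-d * t - w * p : ℤ) : ℝ)
        = m' * ε + (t - q * (γ - N * ε)) / q := by
      push_cast
      rw [hβ]
      field_simp
      rw [hmR]
      linear_combination (t : ℝ) * hcdR
    rw [hid]
    have h1 : |(m' : ℝ) * ε| ≤ 1 / N := by
      rw [abs_mul, Nat.abs_cast]
      calc (m' : ℝ) * |ε| ≤ q * (1 / ((N + 1) * q)) := by gcongr
        _ = 1 / (N + 1) := by field_simp
        _ ≤ 1 / N := by gcongr; linarith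
    have h2 : |((t : ℝ) - q * (γ - N * ε)) / q| ≤ 16 / N := by
      rw [abs_div, abs_of_pos hqR, div_le_div_iff₀ hqR hNR]
      have : |(t : ℝ) - q * (γ - N * ε)| ≤ 1 := by
        rw [abs_le]
        constructor <;>
          linarith [Int.floor_le (q * (γ - N * ε)), Int.lt_floor_add_one (q * (γ - N * ε))]
      nlinarith
    refine (abs_add_le _ _).trans ((add_le_add h1 h2).trans (le_of_eq ?_))
    ring

/-- At scale `N` there are at least `N ^ 2 / 48` shifted fractions `(γ + a) / q` with
`N ≤ q < 2 * N` in `[-20, 20]` which are `N ^ (-2)`-separated. -/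
lemma exists_points (γ : ℝ) {N : ℕ} (hN : 0 < N) :
    ∃ P : Finset ℝ, (∀ x ∈ P, |x| ≤ 20 ∧ ∃ q : ℕ, N ≤ q ∧ q < 2 * N ∧ ∃ a : ℤ, q * x = γ + a) ∧
      Separated (1 / (N : ℝ) ^ 2) P ∧ (N : ℝ) ^ 2 ≤ 48 * P.card := by
  have hNR : (1 : ℝ) ≤ N := by exact_mod_cast hN
  have hN0 : (0 : ℝ) < N := by linarith
  set S : Set ℝ := {x | |x| ≤ 20 ∧ ∃ q : ℕ, N ≤ q ∧ q < 2 * N ∧ ∃ a : ℤ, q * x = γ + a} with hS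
  obtain ⟨P, hPS, hsep, hnet⟩ := exists_net (s := 1 / (N : ℝ) ^ 2) (by positivity)
    (u := -20) (v := 20) (by norm_num) S (fun x hx => abs_le.1 hx.1)
  refine ⟨P, hPS, hsep, ?_⟩
  have hcover : Icc (0 : ℝ) 1 ⊆
      (⋃ q ∈ Finset.Icc 1 (N / 16), ⋃ p ∈ Finset.range (q + 1),
        Metric.closedBall ((p : ℝ) / q) (1 / ((N + 1) * q))) ∪
      ⋃ x ∈ P, Metric.closedBall x (18 / (N : ℝ) ^ 2) := by
    intro β hβ
    rcases small_den_or_approx β γ hN with ⟨q, hq0, hqN, p, hp⟩ | ⟨j, hj1, hj2, a, ha⟩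
    · left
      have hqR : (0 : ℝ) < q := by exact_mod_cast hq0
      have hp' : |q * β - p| < 1 := by
        have : q * β - p = q * (β - p / q) := by field_simp
        rw [this, abs_mul, abs_of_pos hqR]
        calc (q : ℝ) * |β - p / q| ≤ q * (1 / ((N + 1) * q)) := by gcongr
          _ = 1 / (N + 1) := by field_simp
          _ < 1 := by rw [div_lt_one (by positivity)]; linarith
      rw [abs_lt] at hp'
      have hp0 : -1 < p := by
        have : (-1 : ℝ) < p := by nlinarith [hβ.1]
        exact_mod_cast this
      have hp1 : p < q + 1 := by
        have : (p : ℝ) < q + 1 := by nlinarith [hβ.2]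
        exact_mod_cast this
      obtain ⟨p', rfl⟩ := Int.eq_ofNat_of_zero_le (show 0 ≤ p by omega)
      simp only [Set.mem_iUnion]
      refine ⟨q, Finset.mem_Icc.2 ⟨hq0, by omega⟩, p', Finset.mem_range.2 (by omega), ?_⟩
      rw [Metric.mem_closedBall, Real.dist_eq]
      simpa using hp
    · right
      have hjN : (N : ℝ) ≤ j := by exact_mod_cast hj1
      have hj0 : (0 : ℝ) < j := by linarith
      set x := (γ + a) / j with hx
      have hβx : |β - x| ≤ 17 / (N : ℝ) ^ 2 := by
        have : β - x = (j * β - γ - a) / j := by rw [hx]; field_simp; ring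
        rw [this, abs_div, abs_of_pos hj0]
        calc |j * β - γ - a| / j ≤ (17 / N) / N := by gcongr
          _ = _ := by field_simp
      have h17 : 17 / (N : ℝ) ^ 2 ≤ 17 := by
        rw [div_le_iff₀ (by positivity)]; nlinarith
      have hxS : x ∈ S := by
        refine ⟨?_, j, hj1, hj2, a, by rw [hx]; field_simp⟩
        have := abs_le.1 (hβx.trans h17)
        rw [abs_le]
        constructor <;> linarith [hβ.1, hβ.2]
      obtain ⟨y, hyP, hy⟩ := hnet x hxS
      simp only [Set.mem_iUnion]
      refine ⟨y, hyP, ?_⟩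
      rw [Metric.mem_closedBall, Real.dist_eq]
      calc |β - y| ≤ |β - x| + |x - y| := abs_sub_le _ _ _
        _ ≤ 17 / (N : ℝ) ^ 2 + 1 / (N : ℝ) ^ 2 := add_le_add hβx hy.le
        _ = _ := by ring
  have hvol : ENNReal.ofReal 1 ≤ ENNReal.ofReal
      ((∑ q ∈ Finset.Icc 1 (N / 16), ∑ p ∈ Finset.range (q + 1), 2 * (1 / ((N + 1) * (q : ℝ))))
        + ∑ x ∈ P, 2 * (18 / (N : ℝ) ^ 2)) := by
    rw [ENNReal.ofReal_add (by positivity) (by positivity),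
      ENNReal.ofReal_sum_of_nonneg (fun _ _ => by positivity),
      ENNReal.ofReal_sum_of_nonneg (fun _ _ => by positivity)]
    calc ENNReal.ofReal 1 = volume (Icc (0 : ℝ) 1) := by simp
      _ ≤ _ := measure_mono hcover
      _ ≤ _ := measure_union_le _ _
      _ ≤ _ := by
        gcongr
        · refine (measure_biUnion_finset_le _ _).trans (Finset.sum_le_sum fun q _ => ?_)
          rw [ENNReal.ofReal_sum_of_nonneg (fun _ _ => by positivity)]
          refine (measure_biUnion_finset_le _ _).trans (Finset.sum_le_sum fun p _ => ?_)
          rw [Real.volume_closedBall]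
        · refine (measure_biUnion_finset_le _ _).trans (Finset.sum_le_sum fun p _ => ?_)
          rw [Real.volume_closedBall]
  rw [ENNReal.ofReal_le_ofReal_iff (by positivity)] at hvol
  have hbad : (∑ q ∈ Finset.Icc 1 (N / 16), ∑ p ∈ Finset.range (q + 1),
      2 * (1 / ((N + 1) * (q : ℝ)))) ≤ 1 / 4 := by
    calc _ ≤ ∑ q ∈ Finset.Icc 1 (N / 16), 4 / ((N : ℝ) + 1) := by
          refine Finset.sum_le_sum fun q hq => ?_
          have hq1 : (1 : ℝ) ≤ q := by exact_mod_cast (Finset.mem_Icc.1 hq).1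
          rw [Finset.sum_const, Finset.card_range, nsmul_eq_mul]
          push_cast
          rw [show ((q : ℝ) + 1) * (2 * (1 / ((N + 1) * q))) = (2 * (q + 1) / q) / (N + 1) by
            field_simp]
          gcongr
          rw [div_le_iff₀ (by linarith)]
          linarith
      _ = (N / 16 : ℕ) * (4 / ((N : ℝ) + 1)) := by simp
      _ ≤ (N / 16 : ℝ) * (4 / ((N : ℝ) + 1)) := by
          gcongr
          exact Nat.cast_div_le
      _ ≤ 1 / 4 := by
          rw [show (N / 16 : ℝ) * (4 / ((N : ℝ) + 1)) = (N / 4) / (N + 1) by ring,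
            div_le_iff₀ (by positivity)]
          linarith
  rw [Finset.sum_const, nsmul_eq_mul] at hvol
  have h3 : 3 / 4 ≤ (P.card : ℝ) * 36 / (N : ℝ) ^ 2 := by
    have : (P.card : ℝ) * (2 * (18 / (N : ℝ) ^ 2)) = (P.card : ℝ) * 36 / (N : ℝ) ^ 2 := by ring
    linarith
  rw [le_div_iff₀ (by positivity)] at h3
  linarith

/-! ### Unions of short intervals around separated points -/

/-- The union of the half-open intervals `[p, p + r)` over `p ∈ P`. -/
def fattened (P : Finset ℝ) (r : ℝ) : Set ℝ := ⋃ p ∈ P, Ico p (p + r)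

lemma measurableSet_fattened (P : Finset ℝ) (r : ℝ) : MeasurableSet (fattened P r) :=
  Finset.measurableSet_biUnion _ fun _ _ => measurableSet_Ico

lemma volume_fattened_ne_top (P : Finset ℝ) (r : ℝ) : volume (fattened P r) ≠ ∞ := by
  refine ((measure_biUnion_finset_le _ _).trans_lt ?_).ne
  exact ENNReal.sum_lt_top.2 fun p _ => measure_Ico_lt_top

lemma volume_fattened {s r : ℝ} (hr : 0 ≤ r) (hrs : r ≤ s) {P : Finset ℝ} (h : Separated s P) :
    volume.real (fattened P r) = P.card * r := by
  rw [fattened, measureReal_biUnion_finset (h := fun _ _ => measure_Ico_lt_top.ne)]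
  · simp [hr]
  · intro x hx y hy hxy
    have h1 := h x hx y hy hxy
    refine Set.disjoint_left.2 fun z hzx hzy => ?_
    have h2 : |x - y| < r := by
      rw [abs_lt]; constructor <;> linarith [hzx.1, hzx.2, hzy.1, hzy.2]
    linarith
  · intro x _; exact measurableSet_Ico

/-- Each interval `[p, p + r)` meets at most `(r + r') / s' + 1` of the intervals `[p', p' + r')`,
because the points `p'` are `s'`-separated. -/
lemma volume_fattened_inter_le {r r' s' : ℝ} (hr : 0 ≤ r) (hr' : 0 ≤ r') (hs' : 0 < s')
    {P P' : Finset ℝ} (h' : Separated s' P') :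
    volume.real (fattened P r ∩ fattened P' r') ≤ P.card * (((r + r') / s' + 1) * r') := by
  classical
  have hsub : fattened P r ∩ fattened P' r' ⊆
      ⋃ p ∈ P, fattened (P'.filter fun x => p - r' ≤ x ∧ x ≤ p + r) r' := by
    rintro z ⟨hz, hz'⟩
    simp only [fattened, Set.mem_iUnion, exists_prop, Finset.mem_filter] at hz hz' ⊢
    obtain ⟨p, hp, hzp⟩ := hz
    obtain ⟨p', hp', hzp'⟩ := hz'
    exact ⟨p, hp, p', ⟨hp', by linarith [hzp.1, hzp'.2], by linarith [hzp.2, hzp'.1]⟩, hzp'⟩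
  have hfin : volume (⋃ p ∈ P, fattened (P'.filter fun x => p - r' ≤ x ∧ x ≤ p + r) r') ≠ ∞ := by
    refine ((measure_biUnion_finset_le _ _).trans_lt ?_).ne
    exact ENNReal.sum_lt_top.2 fun p _ => (volume_fattened_ne_top _ _).lt_top
  refine (measureReal_mono hsub hfin).trans ((measureReal_biUnion_finset_le _ _).trans ?_)
  rw [← nsmul_eq_mul]
  refine Finset.sum_le_card_nsmul _ _ _ fun p _ => ?_
  refine (measureReal_biUnion_finset_le _ _).trans ?_
  simp only [Real.volume_real_Ico, add_sub_cancel_left, max_eq_left hr', Finset.sum_const,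
    nsmul_eq_mul]
  gcongr
  have := (h'.mono (Finset.filter_subset (fun x => p - r' ≤ x ∧ x ≤ p + r) P')).card_le hs'
    (u := p - r') (v := p + r) (by linarith) (fun x hx => (Finset.mem_filter.1 hx).2)
  rwa [show p + r - (p - r') = r + r' by ring] at this

/-! ### A Borel–Cantelli argument from Bonferroni's inequality -/

/-- A Bonferroni inequality for the union of consecutive members of a sequence of sets. -/
lemma sum_sub_le_measure_biUnion {E : ℕ → Set ℝ} (hE : ∀ n, MeasurableSet (E n))
    (hfin : ∀ n, volume (E n) ≠ ∞) (k l : ℕ) :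
    ∑ n ∈ Finset.Ico k (k + l),
      (volume.real (E n) - ∑ m ∈ Finset.Ico k n, volume.real (E m ∩ E n))
      ≤ volume.real (⋃ n ∈ Finset.Ico k (k + l), E n) := by
  induction l with
  | zero => simp
  | succ l ih =>
    rw [← add_assoc, Finset.sum_Ico_succ_top (by omega)]
    set U := ⋃ n ∈ Finset.Ico k (k + l), E n with hU
    have hUfin : volume U ≠ ∞ :=
      ((measure_biUnion_finset_le _ _).trans_lt (ENNReal.sum_lt_top.2 fun p _ => (hfin p).lt_top)).ne
    have h1 : (⋃ n ∈ Finset.Ico k (k + l + 1), E n) = U ∪ E (k + l) := by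
      rw [← Finset.insert_Ico_right_eq_Ico_add_one (by omega), Finset.set_biUnion_insert,
        Set.union_comm]
    have h2 : volume.real (U ∩ E (k + l)) ≤
        ∑ m ∈ Finset.Ico k (k + l), volume.real (E m ∩ E (k + l)) := by
      rw [hU, Set.iUnion₂_inter]
      exact measureReal_biUnion_finset_le _ _
    have h3 := measureReal_union_add_inter (μ := volume) (s := U) (hE (k + l)) hUfin (hfin _)
    rw [h1]
    linarith

/-- A divergent series of non-negative terms bounded by `ε` has arbitrarily late blocks with sum in
`[ε, 2 * ε]`. -/
lemma exists_block {a : ℕ → ℝ} {ε : ℝ} (ha0 : ∀ n, 0 ≤ a n) (haε : ∀ n, a n ≤ ε)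
    (hε : 0 < ε) (hdiv : ¬ Summable a) (k : ℕ) :
    ∃ l, ε ≤ ∑ n ∈ Finset.Ico k (k + l), a n ∧ ∑ n ∈ Finset.Ico k (k + l), a n ≤ 2 * ε := by
  classical
  have hex : ∃ l, ε ≤ ∑ n ∈ Finset.Ico k (k + l), a n := by
    by_contra hcon
    push Not at hcon
    refine hdiv ((summable_nat_add_iff k).1 ?_)
    refine summable_of_sum_range_le (c := ε) (fun n => ha0 _) fun l => ?_
    have := (hcon l).le
    rw [Finset.sum_Ico_eq_sum_range] at this
    simpa [add_comm] using this
  refine ⟨Nat.find hex, Nat.find_spec hex, ?_⟩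
  rcases h : Nat.find hex with _ | l
  · simp; linarith
  · have h1 := Nat.find_min hex (m := l) (by omega)
    rw [← add_assoc, Finset.sum_Ico_succ_top (by omega)]
    linarith [haε (k + l)]

/-- A divergent series stays divergent after capping its terms at `ε`. -/
lemma not_summable_min {a : ℕ → ℝ} {ε : ℝ} (hε : 0 < ε) (hdiv : ¬ Summable a) :
    ¬ Summable fun n => min (a n) ε := by
  intro h
  apply hdiv
  have h1 := h.tendsto_atTop_zero.eventually (gt_mem_nhds hε)
  refine (summable_congr_atTop (h1.mono fun n hn => ?_)).1 h
  exact min_eq_left ((min_lt_iff.1 hn).resolve_right (lt_irrefl _)).le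

/-! ### The set of approximable numbers and condensation of the series -/

/-- The numbers `β` with `‖q β - γ‖ < ψ q` for infinitely many positive `q`. -/
def approxSet (γ : ℝ) (ψ : ℕ → ℝ) : Set ℝ :=
  {β | {q : ℕ | 0 < q ∧ distNearestInt ((q : ℝ) * β - γ) < ψ q}.Infinite}

lemma measurableSet_approxSet (γ : ℝ) (ψ : ℕ → ℝ) : MeasurableSet (approxSet γ ψ) := by
  have h : approxSet γ ψ =
      limsup (fun q : ℕ => {β : ℝ | 0 < q ∧ distNearestInt ((q : ℝ) * β - γ) < ψ q}) atTop := by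
    ext β
    rw [mem_limsup_iff_frequently_mem, Nat.frequently_atTop_iff_infinite]
    rfl
  rw [h]
  refine MeasurableSet.measurableSet_limsup fun q => ?_
  refine MeasurableSet.inter (s₁ := {_β | 0 < q})
    (s₂ := {β : ℝ | distNearestInt ((q : ℝ) * β - γ) < ψ q}) (MeasurableSet.const _)
    (measurableSet_lt ?_ measurable_const)
  unfold distNearestInt
  simp only [round_eq]
  fun_prop

/-- The series condensed along `2 * 200 ^ n` diverges. -/
lemma not_summable_condensed {ψ : ℕ → ℝ} (hψpos : ∀ q, 0 < ψ q) (hψanti : Antitone ψ)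
    (hdiv : ¬ Summable ψ) :
    ¬ Summable fun n : ℕ => (200 : ℝ) ^ n * ψ (2 * 200 ^ n) / 2 := by
  intro h
  apply hdiv
  rw [← summable_schlomilch_iff_of_nonneg (C := 200) (u := fun n => 2 * 200 ^ n)
    (fun n => (hψpos n).le) (fun m n _ h => hψanti h) (fun n => by positivity)
    (fun a b h => by
      have : 200 ^ a < 200 ^ b := Nat.pow_lt_pow_right (by norm_num) h
      simp only; omega) (by norm_num)
    (fun n => by simp only [pow_succ, smul_eq_mul]; omega)]
  refine (h.mul_left 796).congr fun n => ?_
  push_cast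
  ring

lemma not_summable_comp_mul {ψ : ℕ → ℝ} (hψpos : ∀ q, 0 < ψ q) (hψanti : Antitone ψ)
    (hdiv : ¬ Summable ψ) {k : ℕ} (hk : 0 < k) : ¬ Summable fun q : ℕ => ψ (k * q) := by
  intro h
  apply hdiv
  rw [← summable_schlomilch_iff_of_nonneg (C := 1) (u := fun n => k * (n + 1))
    (fun n => (hψpos n).le) (fun m n _ h => hψanti h) (fun n => by positivity)
    (fun a b h => by
      simp only; gcongr) (by norm_num)
    (fun n => by
      simp only [one_smul]
      rw [← Nat.mul_sub, ← Nat.mul_sub]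
      exact Nat.mul_le_mul_left _ (by omega))]
  refine (((summable_nat_add_iff 1).2 h).mul_left (k : ℝ)).congr fun n => ?_
  push_cast
  ring

/-! ### A uniform lower bound for the measure -/

lemma sum_pow_le (n : ℕ) :
    ∑ m ∈ Finset.range n, ((200 : ℝ) ^ m) ^ 2 ≤ ((200 : ℝ) ^ n) ^ 2 / 39999 := by
  induction n with
  | zero => norm_num
  | succ n ih =>
    rw [Finset.sum_range_succ, pow_succ (200 : ℝ) n, mul_pow]
    nlinarith

/-- The sets `E n` of intervals of length `a n / N ^ 2` at the points found at scale
`N = 200 ^ n` satisfy `|E m ∩ E n| ≪ a m * a n + (M / N) ^ 2 * a n` for `M = 200 ^ m`, while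
`|E n| ≫ a n` and `∑ a n` diverges. This yields a lower bound for the measure of `approxSet γ ψ` in
a fixed interval, with a constant that does not depend on `γ` and `ψ`. -/
lemma volume_approxSet_ge (γ : ℝ) {ψ : ℕ → ℝ} (hψpos : ∀ q, 0 < ψ q) (hψanti : Antitone ψ)
    (hdiv : ¬ Summable ψ) :
    ENNReal.ofReal (1 / 1640000) ≤ volume (approxSet γ ψ ∩ Icc (-20) 21) := by
  choose P hPmem hPsep hPcard using fun n : ℕ =>
    exists_points γ (N := 200 ^ n) (by positivity)
  push_cast at hPsep hPcard
  -- Both summands in the bound `hEinter` below must be small compared to `a n / 48`. The first one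
  -- forces the large ratio `200` of consecutive scales, the second one the cap `1 / 16400`.
  set a : ℕ → ℝ := fun n => min ((200 : ℝ) ^ n * ψ (2 * 200 ^ n) / 2) (1 / 16400) with ha
  have ha0 : ∀ n, 0 ≤ a n := fun n => by
    have := hψpos (2 * 200 ^ n)
    simp only [ha]
    positivity
  have haε : ∀ n, a n ≤ 1 / 16400 := fun n => min_le_right _ _
  have haψ : ∀ n, a n ≤ (200 : ℝ) ^ n * ψ (2 * 200 ^ n) / 2 := fun n => min_le_left _ _
  have hadiv : ¬ Summable a :=
    not_summable_min (by norm_num) (not_summable_condensed hψpos hψanti hdiv)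
  have hN1 : ∀ n : ℕ, (1 : ℝ) ≤ (200 : ℝ) ^ n := fun n => one_le_pow₀ (by norm_num)
  set r : ℕ → ℝ := fun n => a n / ((200 : ℝ) ^ n) ^ 2 with hr
  have hr0 : ∀ n, 0 ≤ r n := fun n => div_nonneg (ha0 n) (by positivity)
  have hr1 : ∀ n, r n ≤ 1 / ((200 : ℝ) ^ n) ^ 2 := fun n => by
    simp only [hr]
    gcongr
    linarith [haε n]
  have hr2 : ∀ n, r n ≤ 1 := fun n => (hr1 n).trans (by
    rw [div_le_one (by positivity)]
    nlinarith [hN1 n])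
  set E : ℕ → Set ℝ := fun n => fattened (P n) (r n) with hE
  have hEmeas : ∀ n, MeasurableSet (E n) := fun n => measurableSet_fattened _ _
  have hEfin : ∀ n, volume (E n) ≠ ∞ := fun n => volume_fattened_ne_top _ _
  have hEsub : ∀ n, E n ⊆ Icc (-20) 21 := by
    intro n β hβ
    simp only [hE, fattened, Set.mem_iUnion, exists_prop] at hβ
    obtain ⟨p, hp, hβp⟩ := hβ
    have := abs_le.1 (hPmem n p hp).1
    exact ⟨by linarith [hβp.1], by linarith [hβp.2, hr2 n]⟩
  have hEvol : ∀ n, a n / 48 ≤ volume.real (E n) := by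
    intro n
    have h1 : volume.real (E n) = (P n).card * r n := volume_fattened (hr0 n) (hr1 n) (hPsep n)
    rw [h1]
    simp only [hr]
    rw [mul_div_assoc', div_le_div_iff₀ (by norm_num) (by positivity)]
    nlinarith [hPcard n, ha0 n]
  have hEinter : ∀ m n, volume.real (E m ∩ E n) ≤
      (82 / ((200 : ℝ) ^ n) ^ 2 * a n) * ((200 : ℝ) ^ m) ^ 2 + (41 * a n) * a m := by
    intro m n
    have h1 := volume_fattened_inter_le (P := P m) (hr0 m) (hr0 n) (by positivity) (hPsep n)
    refine h1.trans ?_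
    have h2 : ((P m).card : ℝ) ≤ 41 * ((200 : ℝ) ^ m) ^ 2 := by
      have := (hPsep m).card_le (by positivity) (u := -20) (v := 20) (by norm_num)
        (fun x hx => abs_le.1 (hPmem m x hx).1)
      rw [div_div_eq_mul_div, div_one] at this
      nlinarith [hN1 m]
    have hM0 : (0 : ℝ) < ((200 : ℝ) ^ m) ^ 2 := by positivity
    have hN0 : (0 : ℝ) < ((200 : ℝ) ^ n) ^ 2 := by positivity
    have h3 : (r m + r n) / (1 / ((200 : ℝ) ^ n) ^ 2) + 1
        ≤ 2 + a m * ((200 : ℝ) ^ n) ^ 2 / ((200 : ℝ) ^ m) ^ 2 := by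
      rw [div_div_eq_mul_div, div_one]
      have : r n * ((200 : ℝ) ^ n) ^ 2 = a n := by simp only [hr]; field_simp
      have h4 : r m * ((200 : ℝ) ^ n) ^ 2 = a m * ((200 : ℝ) ^ n) ^ 2 / ((200 : ℝ) ^ m) ^ 2 := by
        simp only [hr]; ring
      rw [add_mul, this, h4]
      linarith [haε n]
    calc _ ≤ (41 * ((200 : ℝ) ^ m) ^ 2) *
          ((2 + a m * ((200 : ℝ) ^ n) ^ 2 / ((200 : ℝ) ^ m) ^ 2) * r n) :=
          mul_le_mul h2 (mul_le_mul_of_nonneg_right h3 (hr0 n))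
            (mul_nonneg (add_nonneg (div_nonneg (add_nonneg (hr0 m) (hr0 n)) (by positivity))
              zero_le_one) (hr0 n)) (by positivity)
      _ = _ := by
          simp only [hr]
          field_simp
          ring
  -- Every tail of the sequence `E` covers a set of measure bounded below.
  have htail : ∀ k, ENNReal.ofReal (1 / 1640000) ≤ volume (⋃ n ≥ k, E n) := by
    intro k
    obtain ⟨l, hl1, hl2⟩ := exists_block ha0 haε (by norm_num) hadiv k
    have hB := sum_sub_le_measure_biUnion hEmeas hEfin k l
    have hterm : ∀ n ∈ Finset.Ico k (k + l), a n / 100 ≤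
        volume.real (E n) - ∑ m ∈ Finset.Ico k n, volume.real (E m ∩ E n) := by
      intro n hn
      rw [Finset.mem_Ico] at hn
      have h1 : ∑ m ∈ Finset.Ico k n, volume.real (E m ∩ E n) ≤
          (82 / ((200 : ℝ) ^ n) ^ 2 * a n) * (((200 : ℝ) ^ n) ^ 2 / 39999)
            + (41 * a n) * (2 * (1 / 16400)) := by
        refine (Finset.sum_le_sum fun m _ => hEinter m n).trans ?_
        rw [Finset.sum_add_distrib, ← Finset.mul_sum, ← Finset.mul_sum]
        refine add_le_add (mul_le_mul_of_nonneg_left ?_ (mul_nonneg (by positivity) (ha0 n)))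
          (mul_le_mul_of_nonneg_left ?_ (mul_nonneg (by norm_num) (ha0 n)))
        · refine le_trans (Finset.sum_le_sum_of_subset_of_nonneg ?_ fun _ _ _ => by positivity)
            (sum_pow_le n)
          intro m hm
          exact Finset.mem_range.2 (Finset.mem_Ico.1 hm).2
        · refine le_trans (Finset.sum_le_sum_of_subset_of_nonneg ?_ fun _ _ _ => ha0 _) hl2
          exact Finset.Ico_subset_Ico_right hn.2.le
      have h2 : (82 / ((200 : ℝ) ^ n) ^ 2 * a n) * (((200 : ℝ) ^ n) ^ 2 / 39999)
          = 82 / 39999 * a n := by field_simp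
      rw [h2] at h1
      linarith [hEvol n, ha0 n]
    have h3 := (Finset.sum_le_sum hterm).trans hB
    rw [← Finset.sum_div] at h3
    refine (ENNReal.ofReal_le_ofReal (show 1 / 1640000 ≤
      volume.real (⋃ n ∈ Finset.Ico k (k + l), E n) by linarith)).trans ?_
    refine ENNReal.ofReal_toReal_le.trans (measure_mono ?_)
    refine Set.biUnion_subset_biUnion_left fun n hn => ?_
    exact (Finset.mem_Ico.1 hn).1
  have hanti : Antitone fun k => ⋃ n ≥ k, E n := fun k l hkl =>
    Set.biUnion_subset_biUnion_left fun n hn => le_trans hkl hn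
  have hInter : ENNReal.ofReal (1 / 1640000) ≤ volume (⋂ k, ⋃ n ≥ k, E n) := by
    rw [hanti.measure_iInter
      (fun k => (MeasurableSet.biUnion (to_countable _) fun n _ => hEmeas n).nullMeasurableSet)
      ⟨0, ((measure_mono (Set.iUnion₂_subset fun n _ => hEsub n)).trans_lt
        measure_Icc_lt_top).ne⟩]
    exact le_iInf htail
  refine hInter.trans (measure_mono ?_)
  intro β hβ
  simp only [Set.mem_iInter, Set.mem_iUnion, exists_prop] at hβ
  refine ⟨?_, ?_⟩
  · refine Set.infinite_of_forall_exists_gt fun b => ?_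
    obtain ⟨n, hn, hβn⟩ := hβ b
    simp only [hE, fattened, Set.mem_iUnion, exists_prop] at hβn
    obtain ⟨p, hp, hβp⟩ := hβn
    obtain ⟨-, q, hq1, hq2, c, hc⟩ := hPmem n p hp
    have hnq : n < q := (Nat.lt_pow_self (by norm_num)).trans_le hq1
    refine ⟨q, ⟨by omega, ?_⟩, by omega⟩
    have hq2R : (q : ℝ) < 2 * 200 ^ n := by exact_mod_cast hq2
    have hq0 : (0 : ℝ) < q := by exact_mod_cast (show 0 < q by omega)
    calc distNearestInt (q * β - γ) ≤ |q * β - γ - c| := round_le _ _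
      _ = q * (β - p) := by
        rw [show q * β - γ - c = q * (β - p) by linarith, abs_of_nonneg]
        exact mul_nonneg hq0.le (by linarith [hβp.1])
      _ < q * r n := by
        gcongr
        linarith [hβp.2]
      _ ≤ (2 * 200 ^ n) * (1 * ψ (2 * 200 ^ n) / 2 / 200 ^ n) := by
        gcongr
        · exact hr0 n
        · simp only [hr]
          rw [div_le_div_iff₀ (by positivity) (by positivity)]
          have := haψ n
          have h0 := hN1 n
          calc a n * 200 ^ n ≤ (200 ^ n * ψ (2 * 200 ^ n) / 2) * 200 ^ n := by gcongr
            _ = _ := by ring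
      _ = ψ (2 * 200 ^ n) := by field_simp
      _ ≤ ψ q := hψanti hq2.le
  · obtain ⟨n, -, hβn⟩ := hβ 0
    exact hEsub n hβn

/-! ### From positive to full measure -/

/-- If `k * β - j` is `ψ (k * ·)`-approximable then `β` is `ψ`-approximable, through the
denominators `k * q`. -/
lemma approxSet_of_mul_sub {γ : ℝ} {ψ : ℕ → ℝ} {k : ℕ} (hk : 0 < k) {j : ℤ} {β : ℝ}
    (h : k * β - j ∈ approxSet γ fun q => ψ (k * q)) : β ∈ approxSet γ ψ := by
  have hinj : Function.Injective fun q : ℕ => k * q := fun x y hxy =>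
    Nat.eq_of_mul_eq_mul_left hk hxy
  refine (Set.Infinite.image hinj.injOn h).mono ?_
  rintro _ ⟨q, ⟨hq0, hq⟩, rfl⟩
  refine ⟨Nat.mul_pos hk hq0, lt_of_le_of_lt ?_ hq⟩
  have h1 := round_le (((k * q : ℕ) : ℝ) * β - γ)
    (round ((q : ℝ) * (k * β - j) - γ) + q * j)
  refine h1.trans (le_of_eq ?_)
  unfold distNearestInt
  congr 1
  push_cast
  ring

/-- Scaling by `k` turns the uniform bound at unit scale into a lower density bound at scale `1 / k`
around every point. -/
lemma volume_approxSet_inter_closedBall_ge (γ : ℝ) {ψ : ℕ → ℝ} (hψpos : ∀ q, 0 < ψ q)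
    (hψanti : Antitone ψ) (hdiv : ¬ Summable ψ) (x : ℝ) {k : ℕ} (hk : 0 < k) :
    ENNReal.ofReal (1 / 1640000 / 42) ≤
      volume (approxSet γ ψ ∩ Metric.closedBall x (21 / k)) /
        volume (Metric.closedBall x (21 / k)) := by
  have hkR : (0 : ℝ) < k := by exact_mod_cast hk
  have h1 := volume_approxSet_ge γ (ψ := fun q => ψ (k * q)) (fun q => hψpos _)
    (fun a b hab => hψanti (Nat.mul_le_mul_left k hab))
    (not_summable_comp_mul hψpos hψanti hdiv hk)
  set T := approxSet γ (fun q => ψ (k * q)) ∩ Icc (-20) 21 with hT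
  set j : ℤ := ⌊k * x⌋ with hj
  have hsub : (fun β : ℝ => k * β) ⁻¹' ((fun y : ℝ => y + (-j : ℝ)) ⁻¹' T) ⊆
      approxSet γ ψ ∩ Metric.closedBall x (21 / k) := by
    rintro β ⟨hβ1, hβ2⟩
    simp only [← sub_eq_add_neg] at hβ1 hβ2
    refine ⟨approxSet_of_mul_sub hk hβ1, ?_⟩
    rw [Metric.mem_closedBall, Real.dist_eq, abs_le]
    have hk1 : x * k - 21 ≤ β * k ∧ β * k ≤ x * k + 21 := by
      have := Int.floor_le (k * x)
      have := Int.lt_floor_add_one (k * x)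
      constructor <;> linarith [hβ2.1, hβ2.2]
    rw [← neg_div, div_le_iff₀ hkR, le_div_iff₀ hkR]
    constructor <;> linarith [hk1.1, hk1.2]
  have h2 := measure_mono (μ := volume) hsub
  rw [Real.volume_preimage_mul_left hkR.ne', measure_preimage_add_right] at h2
  rw [ENNReal.le_div_iff_mul_le
    (Or.inl (Metric.measure_closedBall_pos volume x (by positivity)).ne')
    (Or.inl measure_closedBall_lt_top.ne), Real.volume_closedBall]
  refine le_trans ?_ h2
  refine le_trans ?_ (mul_le_mul_right h1 _)
  rw [← ENNReal.ofReal_mul (by positivity), ← ENNReal.ofReal_mul (by positivity),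
    abs_of_pos (by positivity)]
  apply ENNReal.ofReal_le_ofReal
  apply le_of_eq
  field_simp
  norm_num

/-- Szüsz's inhomogeneous Khintchine theorem. Let γ ∈ ℝ and let
ψ : ℕ → (0,∞) be non-increasing with Σ ψ(q) = ∞. Then for Lebesgue-almost every β ∈ ℝ the
inequality ‖qβ − γ‖ < ψ(q) has infinitely many solutions q ∈ ℕ. -/
theorem stmt16 (γ : ℝ) (ψ : ℕ → ℝ) (hψpos : ∀ q, 0 < ψ q) (hψanti : Antitone ψ)
    (hdiv : ¬ Summable ψ) :
    ∀ᵐ β : ℝ,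
      {q : ℕ | 0 < q ∧ distNearestInt ((q : ℝ) * β - γ) < ψ q}.Infinite := by
  filter_upwards [Besicovitch.ae_tendsto_measure_inter_div_of_measurableSet volume
    (measurableSet_approxSet γ ψ)] with x hx
  by_contra hxW
  change x ∉ approxSet γ ψ at hxW
  rw [Set.indicator_of_notMem hxW] at hx
  have hseq : Tendsto (fun k : ℕ => (21 : ℝ) / k) atTop (𝓝[>] 0) := by
    refine tendsto_nhdsWithin_iff.2 ⟨tendsto_const_div_atTop_nhds_zero_nat 21, ?_⟩
    filter_upwards [eventually_gt_atTop 0] with k hk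
    have : (0 : ℝ) < k := by exact_mod_cast hk
    exact div_pos (by norm_num) this
  have h0 := ge_of_tendsto (hx.comp hseq) ((eventually_gt_atTop 0).mono fun k hk =>
    volume_approxSet_inter_closedBall_ge γ hψpos hψanti hdiv x hk)
  rw [nonpos_iff_eq_zero, ENNReal.ofReal_eq_zero] at h0
  norm_num at h0
end
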